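/- Let A be a complex *-algebra. Then A is an algebraic Baer *-algebra if and only if A is *-isomorphic to a direct sum M ⊕ B, where M is a finite direct product of full complex matrix algebras M_{n_k}(ℂ) with every n_k ≥ 2, and B is the ℂ-linear span, inside C(T, ℂ) for some Stonean topological space T, of the characteristic functions of the clopen subsets of T. -/

import Mathlib

/-- A (possibly non-unital) complex algebra is *algebraic* if every element generates a
finite-dimensional subalgebra (equivalently, every element is a root of a nonzero
polynomial with complex coefficients). -/
def IsAlgebraicAlgebra (A : Type*) [NonUnitalRing A] [Module ℂ A] : Prop :=
  ∀ a : A, ∃ S : NonUnitalSubalgebra ℂ A, a ∈ S ∧ FiniteDimensional ℂ S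

/-- A pre-C*-norm on a complex `*`-algebra: a submultiplicative norm `σ` with
`σ (x* x) = σ x ^ 2`. -/
def HasPreCstarNorm (A : Type*) [NonUnitalRing A] [Module ℂ A] [Star A] : Prop :=
  ∃ σ : A → ℝ,
    (∀ a : A, σ a = 0 ↔ a = 0) ∧
    (∀ (c : ℂ) (a : A), σ (c • a) = ‖c‖ * σ a) ∧
    (∀ a b : A, σ (a + b) ≤ σ a + σ b) ∧
    (∀ a b : A, σ (a * b) ≤ σ a * σ b) ∧
    (∀ a : A, σ (star a * a) = σ a ^ 2)

/-- The involution is proper if `a* a = 0` implies `a = 0`. -/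
def HasProperInvolution (A : Type*) [NonUnitalRing A] [Star A] : Prop :=
  ∀ a : A, star a * a = 0 → a = 0

/-- Hermitian: every selfadjoint element has real spectrum (computed in the
unitization `ℂ ⊕ A`). -/
def IsHermitianStarAlgebra (A : Type*) [NonUnitalRing A] [Module ℂ A]
    [SMulCommClass ℂ A A] [IsScalarTower ℂ A A] [Star A] : Prop :=
  ∀ a : A, star a = a → ∀ z ∈ spectrum ℂ (a : Unitization ℂ A), z.im = 0

/-- Semisimple: the Jacobson radical is `{0}` (expressed via the unitization, whose
Jacobson radical meets `A` exactly in the Jacobson radical of `A`). -/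
def IsSemisimpleAlgebra (A : Type*) [NonUnitalRing A] [Module ℂ A]
    [SMulCommClass ℂ A A] [IsScalarTower ℂ A A] : Prop :=
  ∀ a : A, (a : Unitization ℂ A) ∈ (⊥ : Ideal (Unitization ℂ A)).jacobson → a = 0

/-- A Baer `*`-ring: the right annihilator of every nonempty subset is the principal
right ideal generated by a projection. -/
def IsBaerStarRing (A : Type*) [Mul A] [Zero A] [Star A] : Prop :=
  ∀ S : Set A, S.Nonempty → ∃ f : A, star f = f ∧ f * f = f ∧
    {y : A | ∀ s ∈ S, s * y = 0} = {z : A | ∃ x : A, z = f * x}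

/-- The set of characteristic functions of clopen subsets of `T`, inside `C(T, ℂ)`. -/
def clopenCharacteristicFunctions (T : Type*) [TopologicalSpace T] : Set C(T, ℂ) :=
  {f : C(T, ℂ) | ∃ U : Set T, IsClopen U ∧ ∀ t : T, f t = U.indicator 1 t}

/-!
A nonzero square-zero element of an algebraic `*`-algebra with proper involution has a multiple
that behaves like the matrix unit `e₂₁`. In an algebraic Baer `*`-algebra orthogonal families of
such units are finite: for an infinite one, the annihilator condition supplies projections `P` and
`Q` meeting at squared cosine `1 / (n + 2)` on the `n`-th unit, and `Q P` would have infinitely many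
eigenvalues.

Hence below `v* v`, for such a unit `v`, there is a minimal projection `g`. The left ideal `A g` is
a finite-dimensional Hilbert space for `(x, y) ↦ x* y ∈ g A g = ℂ g`; an orthonormal basis of it
yields matrix units and a central projection that splits off a full matrix algebra. There are
finitely many such blocks, and their complement contains no unit like `v`, hence no nonzero
square-zero element. It is therefore commutative, and the Gelfand transform on its prime spectrum
identifies it with the span of the characteristic functions of the clopen sets; the annihilator
condition says precisely that this spectrum is extremally disconnected.
-/

section CentralProjection

/-- A central projection of a `*`-ring; these are the units of the direct summands. -/
structure IsCentralProjection {R : Type*} [Mul R] [Star R] (c : R) : Prop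
    extends IsStarProjection c where
  commute (a : R) : Commute c a

namespace IsCentralProjection

variable (𝕜 : Type*) {R : Type*} [CommSemiring 𝕜] [NonUnitalSemiring R] [StarRing R] [Module 𝕜 R]
  [SMulCommClass 𝕜 R R] {c : R}

/-- The direct summand `c R` cut out by a central projection `c`, as the set of elements fixed by
`c`. -/
def corner (hc : IsCentralProjection c) : NonUnitalStarSubalgebra 𝕜 R where
  carrier := {x | c * x = x}
  add_mem' hx hy := by simp_all [mul_add]
  zero_mem' := mul_zero c
  mul_mem' hx _ := by simp_all [← mul_assoc]
  smul_mem' r x hx := by simp_all [mul_smul_comm]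
  star_mem' {x} hx := by
    have := congrArg star hx
    rwa [star_mul, hc.isSelfAdjoint.star_eq, ← (hc.commute _).eq] at this

variable {𝕜}

theorem mem_corner (hc : IsCentralProjection c) {x : R} : x ∈ hc.corner 𝕜 ↔ c * x = x := Iff.rfl

variable (𝕜)

theorem mul_mem_corner (hc : IsCentralProjection c) (x : R) : c * x ∈ hc.corner 𝕜 := by
  rw [mem_corner, ← mul_assoc, hc.isIdempotentElem]

end IsCentralProjection

end CentralProjection

section BaerStarRing

theorem isBaerStarRing_iff {R : Type*} [NonUnitalSemiring R] [StarRing R] :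
    IsBaerStarRing R ↔ ∀ S : Set R, S.Nonempty →
      ∃ f : R, IsStarProjection f ∧ ∀ y, (∀ s ∈ S, s * y = 0) ↔ f * y = y := by
  refine forall₂_congr fun S _ => exists_congr fun f => ?_
  rw [isStarProjection_iff, and_comm (a := IsIdempotentElem f), and_assoc]
  refine and_congr_right fun _ => and_congr_right fun hf => ?_
  rw [Set.ext_iff]
  refine forall_congr' fun y => iff_congr Iff.rfl ⟨?_, fun hy => ⟨y, hy.symm⟩⟩
  rintro ⟨x, rfl⟩
  rw [← mul_assoc, hf]

namespace IsBaerStarRing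

section NonUnital

variable {R R' : Type*} [NonUnitalRing R] [StarRing R] [NonUnitalRing R'] [StarRing R']

theorem exists_identity (hR : IsBaerStarRing R) : ∃ e : R, ∀ x, e * x = x ∧ x * e = x := by
  obtain ⟨e, he, heR⟩ := isBaerStarRing_iff.1 hR {0} (Set.singleton_nonempty 0)
  have left_id (x : R) : e * x = x := (heR x).1 (by simp)
  refine ⟨e, fun x => ⟨left_id x, star_injective ?_⟩⟩
  rw [star_mul, he.isSelfAdjoint.star_eq, left_id]

/-- The unital ring structure on a Baer `*`-ring: the identity is the projection that generates
the annihilator of `0`. -/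
noncomputable abbrev toRing (hR : IsBaerStarRing R) : Ring R :=
  { ‹NonUnitalRing R› with
    one := hR.exists_identity.choose
    one_mul := fun x => (hR.exists_identity.choose_spec x).1
    mul_one := fun x => (hR.exists_identity.choose_spec x).2 }

theorem hasProperInvolution (hR : IsBaerStarRing R) : HasProperInvolution R := by
  intro x hx
  obtain ⟨f, hf, hfx⟩ := isBaerStarRing_iff.1 hR {star x} (Set.singleton_nonempty _)
  simp only [Set.mem_singleton_iff, forall_eq] at hfx
  have hxf : star x * f = star x := by
    simpa [hf.isSelfAdjoint.star_eq] using congrArg star ((hfx x).1 hx)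
  rw [← star_eq_zero, ← hxf, (hfx f).2 hf.isIdempotentElem]

theorem of_equiv {F : Type*} [EquivLike F R R'] [NonUnitalRingHomClass F R R']
    [StarHomClass F R R'] (φ : F) (hR' : IsBaerStarRing R') : IsBaerStarRing R := by
  rw [isBaerStarRing_iff] at hR' ⊢
  intro S hS
  obtain ⟨f, hf, hfS⟩ := hR' (φ '' S) (hS.image φ)
  obtain ⟨e, rfl⟩ := EquivLike.surjective φ f
  refine ⟨e, ⟨?_, ?_⟩, fun y => ?_⟩
  · exact EquivLike.injective φ (by simpa using hf.isIdempotentElem.eq)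
  · exact EquivLike.injective φ (by simpa [map_star] using hf.isSelfAdjoint.star_eq)
  · rw [← EmbeddingLike.apply_eq_iff_eq φ, map_mul, ← hfS (φ y), Set.forall_mem_image]
    simp [← map_mul]

theorem prod (hR : IsBaerStarRing R) (hR' : IsBaerStarRing R') : IsBaerStarRing (R × R') := by
  rw [isBaerStarRing_iff] at *
  intro S hS
  obtain ⟨f, hf, hfS⟩ := hR (Prod.fst '' S) (hS.image _)
  obtain ⟨g, hg, hgS⟩ := hR' (Prod.snd '' S) (hS.image _)
  refine ⟨(f, g), ⟨Prod.ext hf.1 hg.1, Prod.ext hf.2 hg.2⟩, fun y => ?_⟩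
  rw [Prod.ext_iff]
  simp only [Prod.fst_mul, Prod.snd_mul, ← hfS, ← hgS, Set.forall_mem_image, ← forall₂_and]
  exact forall₂_congr fun s _ => Prod.ext_iff

theorem pi {ι : Type*} {A : ι → Type*} [∀ i, NonUnitalRing (A i)] [∀ i, StarRing (A i)]
    (hA : ∀ i, IsBaerStarRing (A i)) : IsBaerStarRing (∀ i, A i) := by
  simp only [isBaerStarRing_iff] at *
  intro S hS
  choose f hf hfS using fun i => hA i (Function.eval i '' S) (hS.image _)
  refine ⟨f, ⟨funext fun i => (hf i).1, funext fun i => (hf i).2⟩, fun y => ?_⟩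
  simp only [funext_iff, Pi.mul_apply, ← hfS, Set.forall_mem_image, Pi.zero_apply,
    Function.eval]
  exact ⟨fun h i s hs => h s hs i, fun h s hs i => h i hs⟩

theorem corner {𝕜 A : Type*} [CommSemiring 𝕜] [NonUnitalRing A] [StarRing A] [Module 𝕜 A]
    [SMulCommClass 𝕜 A A] (hA : IsBaerStarRing A) {w : A}
    (hw : IsCentralProjection w) : IsBaerStarRing (hw.corner 𝕜) := by
  rw [isBaerStarRing_iff] at *
  intro S hS
  obtain ⟨f, hf, hfS⟩ := hA (Subtype.val '' S) (hS.image _)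
  have hwf : IsStarProjection (w * f) := hw.mul hf (hw.commute f)
  refine ⟨⟨w * f, hw.mul_mem_corner 𝕜 f⟩, ⟨Subtype.ext hwf.1, Subtype.ext hwf.2⟩, fun y => ?_⟩
  have hfy : w * f * (y : A) = f * y := by
    rw [(hw.commute f).eq, mul_assoc, hw.mem_corner.1 y.2]
  simpa [Subtype.ext_iff, hfy] using hfS y

end NonUnital

section Unital

variable {R : Type*} [Ring R] [StarRing R]

theorem exists_right_support (hR : IsBaerStarRing R) (S : Set R) :
    ∃ p : R, IsStarProjection p ∧ (∀ s ∈ S, s * p = s) ∧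
      ∀ y, (∀ s ∈ S, s * y = 0) → p * y = 0 := by
  obtain ⟨f, hf, hfS⟩ := isBaerStarRing_iff.1 hR (insert 0 S) (Set.insert_nonempty 0 S)
  simp only [Set.forall_mem_insert, zero_mul, true_and] at hfS
  refine ⟨1 - f, hf.one_sub, fun s hs => ?_, fun y hy => ?_⟩
  · rw [mul_sub, mul_one, (hfS f).2 hf.isIdempotentElem s hs, sub_zero]
  · rw [sub_mul, one_mul, (hfS y).1 hy, sub_self]

end Unital

end IsBaerStarRing

theorem isBaerStarRing_continuousLinearMap {𝕜 E : Type*} [RCLike 𝕜] [NormedAddCommGroup E]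
    [InnerProductSpace 𝕜 E] [CompleteSpace E] : IsBaerStarRing (E →L[𝕜] E) := by
  refine isBaerStarRing_iff.2 fun S _ => ?_
  let W : Submodule 𝕜 E := ⨅ s ∈ S, LinearMap.ker (s : E →ₗ[𝕜] E)
  have mem_W (x : E) : x ∈ W ↔ ∀ s ∈ S, s x = 0 := by simp [W]
  have : CompleteSpace W := by
    refine IsClosed.completeSpace_coe (hs := ?_)
    have : (W : Set E) = ⋂ s ∈ S, {x | s x = 0} := by ext x; simp [mem_W]
    rw [this]
    exact isClosed_biInter fun s _ => isClosed_eq s.continuous continuous_const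
  refine ⟨W.starProjection, isStarProjection_starProjection, fun y => ?_⟩
  simp only [ContinuousLinearMap.ext_iff, mul_apply_eq_comp,
    Submodule.starProjection_eq_self_iff, mem_W, zero_apply]
  exact ⟨fun h x s hs => h s hs x, fun h s hs x => h x s hs⟩

theorem isBaerStarRing_matrix {𝕜 n : Type*} [RCLike 𝕜] [Fintype n] :
    IsBaerStarRing (Matrix n n 𝕜) := by
  classical
  exact isBaerStarRing_continuousLinearMap.of_equiv (Matrix.toEuclideanCLM (n := n) (𝕜 := 𝕜))

end BaerStarRing

section Algebraic

theorem IsAlgebraicAlgebra.of_injective {A B : Type*} [NonUnitalRing A] [Module ℂ A]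
    [NonUnitalRing B] [Module ℂ B] {F : Type*} [FunLike F A B] [NonUnitalAlgHomClass F ℂ A B]
    (hB : IsAlgebraicAlgebra B) (φ : F) (hφ : Function.Injective φ) : IsAlgebraicAlgebra A := by
  intro a
  obtain ⟨S, haS, _⟩ := hB (φ a)
  let φS : S.comap φ →ₗ[ℂ] S :=
    { toFun := fun x => ⟨φ x, x.2⟩
      map_add' := fun x y => Subtype.ext (map_add φ (x : A) y)
      map_smul' := fun r x => Subtype.ext (map_smul φ r (x : A)) }
  refine ⟨S.comap φ, haS, .of_injective φS fun x y hxy => ?_⟩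
  exact Subtype.ext (hφ (congrArg Subtype.val hxy))

theorem IsAlgebraicAlgebra.isIntegral {A : Type*} [Ring A] [Algebra ℂ A]
    (hA : IsAlgebraicAlgebra A) : Algebra.IsIntegral ℂ A := by
  refine ⟨fun a => ?_⟩
  obtain ⟨S, haS, _⟩ := hA a
  have : Module.Finite ℂ (Unitization ℂ S) := .equiv (Unitization.linearEquiv ℂ ℂ S).symm
  simpa using (IsIntegral.of_finite ℂ ((⟨a, haS⟩ : S) : Unitization ℂ S)).map
    (NonUnitalSubalgebra.unitization S)

theorem isAlgebraicAlgebra_of_isIntegral (A : Type*) [Ring A] [Algebra ℂ A]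
    [Algebra.IsIntegral ℂ A] : IsAlgebraicAlgebra A := fun a =>
  ⟨(Algebra.adjoin ℂ {a}).toNonUnitalSubalgebra, Algebra.self_mem_adjoin_singleton ℂ a,
    Module.Finite.iff_fg.2 (Algebra.IsIntegral.isIntegral (R := ℂ) a).fg_adjoin_singleton⟩

end Algebraic

section ClopenSpan

variable {T : Type*} [TopologicalSpace T]

theorem isIntegral_of_mem_span_clopen {f : C(T, ℂ)}
    (hf : f ∈ Submodule.span ℂ (clopenCharacteristicFunctions T)) : IsIntegral ℂ f := by
  suffices Submodule.span ℂ (clopenCharacteristicFunctions T) ≤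
      Subalgebra.toSubmodule (integralClosure ℂ C(T, ℂ)) from this hf
  refine Submodule.span_le.2 ?_
  rintro e ⟨U, -, he⟩
  refine ⟨Polynomial.X ^ 2 - Polynomial.X, by monicity!, ?_⟩
  ext t
  by_cases h : t ∈ U <;> simp [he, h]

theorem isIntegral_of_eq_span_clopen (S : StarSubalgebra ℂ C(T, ℂ))
    (hS : (S : Set C(T, ℂ)) = Submodule.span ℂ (clopenCharacteristicFunctions T)) :
    Algebra.IsIntegral ℂ S :=
  ⟨fun f => (isIntegral_algHom_iff S.subtype.toAlgHom Subtype.val_injective).1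
    (isIntegral_of_mem_span_clopen (hS ▸ f.2 : (f : C(T, ℂ)) ∈ (_ : Set C(T, ℂ))))⟩

theorem isBaerStarRing_of_eq_span_clopen [ExtremallyDisconnected T] (S : StarSubalgebra ℂ C(T, ℂ))
    (hS : (S : Set C(T, ℂ)) = Submodule.span ℂ (clopenCharacteristicFunctions T)) :
    IsBaerStarRing S := by
  refine isBaerStarRing_iff.2 fun X _ => ?_
  let V : Set T := ⋃ f ∈ X, {t | (f : C(T, ℂ)) t ≠ 0}
  have hV : IsOpen V := isOpen_biUnion fun f _ =>
    isOpen_compl_singleton.preimage (f : C(T, ℂ)).continuous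
  have hclV : IsClopen (closure V)ᶜ :=
    IsClopen.compl ⟨isClosed_closure, ExtremallyDisconnected.open_closure V hV⟩
  let e : C(T, ℂ) := ⟨(closure V)ᶜ.indicator 1, hclV.continuous_indicator continuous_const⟩
  have heS : e ∈ S := by
    rw [← SetLike.mem_coe, hS]
    exact Submodule.subset_span ⟨_, hclV, fun t => rfl⟩
  have annihilates_iff (y : S) : (∀ f ∈ X, f * y = 0) ↔ ∀ t ∈ V, (y : C(T, ℂ)) t = 0 := by
    simp only [Subtype.ext_iff, ContinuousMap.ext_iff, V, Set.mem_iUnion]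
    simp only [MulMemClass.coe_mul, ContinuousMap.mul_apply, ZeroMemClass.coe_zero,
      ContinuousMap.zero_apply, mul_eq_zero, or_iff_not_imp_left, Subtype.forall, ne_eq,
      Set.mem_ofPred_eq, exists_prop, Subtype.exists, exists_and_right, forall_exists_index,
      and_imp]
    grind
  have fixed_iff (y : S) : ⟨e, heS⟩ * y = y ↔ ∀ t ∈ closure V, (y : C(T, ℂ)) t = 0 := by
    simp only [Subtype.ext_iff, ContinuousMap.ext_iff]
    refine forall_congr' fun t => ?_
    by_cases ht : t ∈ closure V <;> simp [e, ht, eq_comm]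
  refine ⟨⟨e, heS⟩, ⟨?_, ?_⟩, fun y => ?_⟩
  · exact (fixed_iff _).2 fun t ht => by simp [e, ht]
  · ext t
    by_cases ht : t ∈ closure V <;> simp [e, ht]
  · rw [annihilates_iff, fixed_iff]
    refine ⟨fun h => ?_, fun h t ht => h t (subset_closure ht)⟩
    exact closure_minimal h (isClosed_singleton.preimage (y : C(T, ℂ)).continuous)

end ClopenSpan

section Diagonalization

open Polynomial

variable {k B : Type*} [Field k]

theorem aeval_mul_of_mul_eq_smul [Ring B] [Algebra k B] {b e : B} {c : k} (h : b * e = c • e)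
    (p : k[X]) : aeval b p * e = p.eval c • e := by
  have := Module.End.aeval_apply_of_mem_apply_eq_smul (f := Algebra.lmul k B b) (p := p) h
  rwa [aeval_algHom_apply] at this

theorem finite_eigenvalues [Ring B] [Algebra k B] {b : B} (hb : IsIntegral k b) :
    {c : k | ∃ e ≠ 0, b * e = c • e}.Finite := by
  refine (minpoly k b).rootSet_finite k |>.subset ?_
  rintro c ⟨e, he, hbe⟩
  have := aeval_mul_of_mul_eq_smul hbe (minpoly k b)
  rw [minpoly.aeval, zero_mul, eq_comm, smul_eq_zero_iff_left he] at this
  simpa [mem_rootSet, minpoly.ne_zero hb] using this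

theorem mem_span_idempotents_of_aeval_nodal_eq_zero [Ring B] [Algebra k B] {b : B} {s : Finset k}
    (h : aeval b (Lagrange.nodal s id) = 0) :
    b ∈ Submodule.span k {e | IsIdempotentElem e ∧ ∃ c : k, c ≠ 0 ∧ b * e = c • e} := by
  classical
  rcases s.eq_empty_or_nonempty with rfl | hs
  · rw [← mul_one b, ← map_one (aeval (R := k) b), ← Lagrange.nodal_empty (v := id), h, mul_zero]
    exact zero_mem _
  set e : k → B := fun c => aeval b (Lagrange.basis s id c)
  have eigen {c : k} (hc : c ∈ s) : b * e c = c • e c := by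
    have : (X - C c) * Lagrange.basis s id c
        = C (Lagrange.nodalWeight s id c) * Lagrange.nodal s id := by
      rw [Lagrange.basis_eq_prod_sub_inv_mul_nodal_div hc, ← Lagrange.nodal_erase_eq_nodal_div hc,
        Lagrange.nodal_eq_mul_nodal_erase hc, id, mul_left_comm]
    have := congrArg (aeval b) this
    rwa [map_mul, map_mul, h, mul_zero, map_sub, aeval_X, aeval_C, sub_mul, ← Algebra.smul_def,
      sub_eq_zero] at this
  have idem {c : k} (hc : c ∈ s) : IsIdempotentElem (e c) := by
    have := aeval_mul_of_mul_eq_smul (eigen hc) (Lagrange.basis s id c)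
    have eval_one : (Lagrange.basis s id c).eval c = 1 :=
      Lagrange.eval_basis_self Function.injective_id.injOn hc
    rwa [eval_one, one_smul] at this
  have sum_e : ∑ c ∈ s, e c = 1 := by
    rw [← map_sum, Lagrange.sum_basis Function.injective_id.injOn hs, map_one]
  have b_eq : b = ∑ c ∈ s, c • e c := by
    rw [← mul_one b, ← sum_e, Finset.mul_sum, Finset.sum_congr rfl fun c hc => eigen hc]
  suffices ∀ c ∈ s, c • e c ∈ Submodule.span k {e | IsIdempotentElem e ∧ ∃ c : k, c ≠ 0 ∧
      b * e = c • e} by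
    have := Submodule.sum_mem _ this
    rwa [← b_eq] at this
  intro c hc
  rcases eq_or_ne c 0 with rfl | hc0
  · rw [zero_smul]
    exact zero_mem _
  · exact Submodule.smul_mem _ c (Submodule.subset_span ⟨idem hc, c, hc0, eigen hc⟩)

theorem mem_span_idempotents_of_isIntegral [IsAlgClosed k] [CommRing B] [IsReduced B] [Algebra k B]
    {b : B} (hb : IsIntegral k b) :
    b ∈ Submodule.span k {e | IsIdempotentElem e ∧ ∃ c : k, c ≠ 0 ∧ b * e = c • e} := by
  classical
  refine mem_span_idempotents_of_aeval_nodal_eq_zero (s := (minpoly k b).roots.toFinset) ?_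
  obtain ⟨n, hn⟩ := Multiset.le_smul_dedup (minpoly k b).roots
  have : minpoly k b ∣ Lagrange.nodal (minpoly k b).roots.toFinset id ^ n := by
    refine (IsAlgClosed.dvd_iff_roots_le_roots (minpoly.ne_zero hb)
      (pow_ne_zero _ Lagrange.nodal_ne_zero)).2 ?_
    rw [roots_pow, Lagrange.nodal_eq]
    simpa only [id, Multiset.toFinset_val, roots_prod_X_sub_C] using hn
  obtain ⟨q, hq⟩ := this
  refine eq_zero_of_pow_eq_zero (n := n) ?_
  rw [← map_pow, hq, map_mul, minpoly.aeval, zero_mul]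

end Diagonalization

section ProperInvolution

namespace HasProperInvolution

section CommRing

variable {B : Type*} [CommRing B] [StarRing B]

theorem isReduced (hB : HasProperInvolution B) : IsReduced B := by
  refine (isReduced_iff_pow_one_lt 2 one_lt_two).2 fun x hx => hB x (hB _ ?_)
  rw [star_mul, star_star]
  linear_combination star x ^ 2 * hx

theorem isStarProjection (hB : HasProperInvolution B) {e : B} (he : IsIdempotentElem e) :
    IsStarProjection e := by
  have hse : star e * star e = star e := by rw [← star_mul, he.eq]
  have : e - star e * e = 0 := hB _ <| by
    rw [star_sub, star_mul, star_star]
    linear_combination (e * e - e) * hse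
  rw [sub_eq_zero] at this
  refine ⟨he, ?_⟩
  rw [this]
  exact IsSelfAdjoint.star_mul_self e

end CommRing

variable {k A : Type*} [Field k] [IsAlgClosed k] [StarRing k] [Ring A] [StarRing A] [Algebra k A]
  [StarModule k A]

theorem mem_span_isStarProjection (hA : HasProperInvolution A) {a : A} [IsStarNormal a]
    (ha : IsIntegral k a) :
    a ∈ Submodule.span k {e | IsStarProjection e ∧ ∃ c : k, c ≠ 0 ∧ a * e = c • e} := by
  open scoped IsMulCommutative in
  let C := StarAlgebra.adjoin k {a}
  let b : C := ⟨a, StarAlgebra.self_mem_adjoin_singleton k a⟩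
  have hC : HasProperInvolution C := fun x hx => Subtype.ext (hA x (congrArg Subtype.val hx))
  have := hC.isReduced
  have hb : IsIntegral k b := (isIntegral_algHom_iff C.subtype.toAlgHom Subtype.val_injective).1 ha
  have := Submodule.mem_map_of_mem (f := C.subtype.toLinearMap)
    (mem_span_idempotents_of_isIntegral hb)
  rw [Submodule.map_span] at this
  refine Submodule.span_mono ?_ this
  rintro _ ⟨e, ⟨he, c, hc, hbe⟩, rfl⟩
  exact ⟨(hC.isStarProjection he).map C.subtype, c, hc, congrArg Subtype.val hbe⟩

end HasProperInvolution

end ProperInvolution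

section Projections

namespace HasProperInvolution

variable {A : Type*} [Ring A] [StarRing A] [Algebra ℂ A] [StarModule ℂ A] [Algebra.IsIntegral ℂ A]

theorem exists_eigenprojection (hA : HasProperInvolution A) {a : A} [IsStarNormal a] (ha : a ≠ 0) :
    ∃ f : A, IsStarProjection f ∧ f ≠ 0 ∧ ∃ c : ℂ, c ≠ 0 ∧ a * f = c • f := by
  by_contra! h
  refine ha ((Submodule.mem_bot ℂ).1 (Submodule.span_le.2 ?_
    (hA.mem_span_isStarProjection (Algebra.IsIntegral.isIntegral (R := ℂ) a))))
  rintro f ⟨hf, c, hc, haf⟩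
  by_contra hf0
  exact h f hf hf0 c hc haf

open scoped ComplexStarModule in
theorem mem_span_isStarProjection_le (hA : HasProperInvolution A) {h x : A} (hh : IsSelfAdjoint h)
    (hx : h * x = x) (xh : x * h = x) :
    x ∈ Submodule.span ℂ {e | IsStarProjection e ∧ h * e = e} := by
  have mem_of_isSelfAdjoint {y : A} (hy : IsSelfAdjoint y) (hhy : h * y = y) :
      y ∈ Submodule.span ℂ {e | IsStarProjection e ∧ h * e = e} := by
    have := hy.isStarNormal
    refine Submodule.span_mono ?_
      (hA.mem_span_isStarProjection (Algebra.IsIntegral.isIntegral (R := ℂ) y))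
    rintro e ⟨he, c, hc, hye⟩
    refine ⟨he, smul_right_injective A hc ?_⟩
    simp only
    rw [← mul_smul_comm, ← hye, ← mul_assoc, hhy]
  have hsx : h * star x = star x := by
    rw [← hh.star_eq, ← star_mul, xh]
  rw [← realPart_add_I_smul_imaginaryPart x]
  refine add_mem (mem_of_isSelfAdjoint (ℜ x).2 ?_)
    (Submodule.smul_mem _ _ (mem_of_isSelfAdjoint (ℑ x).2 ?_))
  · rw [realPart_apply_coe, mul_smul_comm, mul_add, hx, hsx]
  · rw [imaginaryPart_apply_coe, mul_smul_comm, mul_smul_comm, mul_sub, hx, hsx]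

end HasProperInvolution

/-- A negative `c` would make `y + √(-c) g` a null vector of the proper involution. -/
theorem HasProperInvolution.exists_nonneg_of_star_mul_self_eq_smul {A : Type*} [Ring A]
    [StarRing A] [Algebra ℂ A] [StarModule ℂ A] (hA : HasProperInvolution A) {g y : A} {c : ℂ}
    (hg : IsStarProjection g) (hg0 : g ≠ 0) (hgy : g * y = 0) (hy : star y * y = c • g) :
    ∃ r : ℝ, 0 ≤ r ∧ c = r := by
  have hreal : star c = c := by
    have := congrArg star hy
    rw [star_mul, star_star, hy, star_smul, hg.isSelfAdjoint.star_eq] at this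
    exact smul_left_injective ℂ hg0 this.symm
  obtain ⟨r, rfl⟩ : ∃ r : ℝ, (r : ℂ) = c := ⟨c.re, Complex.conj_eq_iff_re.1 hreal⟩
  refine ⟨r, not_lt.1 fun hr => ?_, rfl⟩
  have hyg : star y * g = 0 := by
    simpa [hg.isSelfAdjoint.star_eq] using congrArg star hgy
  have hsq : ((√(-r) : ℝ) : ℂ) * (√(-r) : ℝ) = -r := by
    exact_mod_cast Real.mul_self_sqrt (by linarith : 0 ≤ -r)
  have null : y + ((√(-r) : ℝ) : ℂ) • g = 0 := hA _ <| by
    rw [star_add, star_smul, hg.isSelfAdjoint.star_eq, Complex.star_def, Complex.conj_ofReal,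
      add_mul, mul_add, mul_add, hy, mul_smul_comm, hyg, smul_mul_assoc, hgy,
      smul_mul_smul_comm, hg.isIdempotentElem.eq, hsq]
    module
  have := congrArg (g * ·) null
  simp only [mul_add, hgy, mul_smul_comm, hg.isIdempotentElem.eq, zero_add, mul_zero,
    smul_eq_zero_iff_left hg0, Complex.ofReal_eq_zero] at this
  exact (Real.sqrt_pos.2 (neg_pos.2 hr)).ne' this

theorem exists_smul_star_mul_self_eq {A : Type*} [NonUnitalRing A] [StarRing A] [Module ℂ A]
    [StarModule ℂ A] [IsScalarTower ℂ A A] [SMulCommClass ℂ A A] {g y : A} {r : ℝ}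
    (hr : 0 < r) (hy : star y * y = (r : ℂ) • g) :
    ∃ d : ℂ, star (d • y) * (d • y) = g := by
  refine ⟨((√r)⁻¹ : ℝ), ?_⟩
  rw [star_smul, Complex.star_def, Complex.conj_ofReal, smul_mul_smul_comm, hy, smul_smul]
  norm_cast
  rw [← mul_inv, Real.mul_self_sqrt hr.le, inv_mul_cancel₀ hr.ne', one_smul]

end Projections

section OffDiagonal

/-- An element behaving like the off-diagonal matrix unit `e₂₁`: a nonzero partial isometry `v` of
square zero. Together with its adjoint and `v* v`, `v v*` it spans a copy of `M₂(ℂ)`. -/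
structure IsOffDiagonalUnit {R : Type*} [Mul R] [Zero R] [Star R] (v : R) : Prop where
  mul_star_mul_self : v * star v * v = v
  mul_self : v * v = 0
  ne_zero : v ≠ 0

namespace IsOffDiagonalUnit

section Ring

variable {R : Type*} [NonUnitalRing R] [StarRing R] {v : R}

theorem isStarProjection_star_mul_self (hv : IsOffDiagonalUnit v) :
    IsStarProjection (star v * v) := by
  refine ⟨?_, .star_mul_self v⟩
  rw [IsIdempotentElem, mul_assoc, ← mul_assoc v, hv.mul_star_mul_self]

theorem star_mul_self_ne_zero (hv : IsOffDiagonalUnit v) : star v * v ≠ 0 := fun h =>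
  hv.ne_zero <| by rw [← hv.mul_star_mul_self, mul_assoc, h, mul_zero]

theorem star_mul_self_mul (hv : IsOffDiagonalUnit v) : star v * v * v = 0 := by
  rw [mul_assoc, hv.mul_self, mul_zero]

theorem mul_projection (hv : IsOffDiagonalUnit v) {e : R} (he : IsStarProjection e) (he0 : e ≠ 0)
    (hve : star v * v * e = e) : IsOffDiagonalUnit (v * e) ∧ star (v * e) * (v * e) = e := by
  have hstar : star (v * e) * (v * e) = e := by
    rw [star_mul, he.isSelfAdjoint.star_eq, mul_assoc, ← mul_assoc (star v), hve,
      he.isIdempotentElem]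
  have hev : e * v = 0 := by
    have : e * (star v * v) = e := by
      simpa [he.isSelfAdjoint.star_eq, mul_assoc] using congrArg star hve
    rw [← this, mul_assoc, hv.star_mul_self_mul, mul_zero]
  refine ⟨⟨?_, ?_, fun h => he0 ?_⟩, hstar⟩
  · rw [mul_assoc, hstar, mul_assoc, he.isIdempotentElem]
  · rw [mul_assoc, ← mul_assoc e, hev, zero_mul, mul_zero]
  · rw [← hstar, h, mul_zero]

end Ring

/-- The projection onto the line through `√t` times the initial vector plus `√(1 - t)` times the
final vector of the partial isometry `v`. -/
theorem exists_rotated_projection {A : Type*} [NonUnitalRing A] [StarRing A] [Module ℂ A]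
    [StarModule ℂ A] [IsScalarTower ℂ A A] [SMulCommClass ℂ A A] {v : A} (hv : IsOffDiagonalUnit v)
    {t : ℝ} (ht0 : 0 ≤ t) (ht1 : t ≤ 1) :
    ∃ p : A, IsStarProjection p ∧ p * (star v * v + v * star v) = p ∧
      star v * v * p * (star v * v) = (t : ℂ) • (star v * v) := by
  set g := star v * v with hg_def
  have hg : IsStarProjection g := hv.isStarProjection_star_mul_self
  have hgv : g * v = 0 := hv.star_mul_self_mul
  have hvg : v * g = v := by rw [hg_def, ← mul_assoc, hv.mul_star_mul_self]
  let y : A := ((√t : ℝ) : ℂ) • g + ((√(1 - t) : ℝ) : ℂ) • v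
  have star_y : star y = ((√t : ℝ) : ℂ) • g + ((√(1 - t) : ℝ) : ℂ) • star v := by
    simp only [y, star_add, star_smul, hg.isSelfAdjoint.star_eq, Complex.star_def,
      Complex.conj_ofReal]
  have hsvg : star v * g = 0 := by simpa [hg.isSelfAdjoint.star_eq] using congrArg star hgv
  have sq_t : ((√t : ℝ) : ℂ) * (√t : ℝ) = t := by exact_mod_cast Real.mul_self_sqrt ht0
  have sq_one_sub : ((√(1 - t) : ℝ) : ℂ) * (√(1 - t) : ℝ) = 1 - t := by
    exact_mod_cast Real.mul_self_sqrt (sub_nonneg.2 ht1)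
  have star_y_mul_y : star y * y = g := by
    simp only [star_y, y, add_mul, mul_add, smul_mul_smul_comm, hg.isIdempotentElem.eq, hgv, hsvg,
      ← hg_def, sq_t, sq_one_sub]
    module
  have y_mul_g : y * g = y := by
    simp only [y, add_mul, smul_mul_assoc, hg.isIdempotentElem.eq, hvg]
  have g_mul_y : g * y = ((√t : ℝ) : ℂ) • g := by
    simp only [y, mul_add, mul_smul_comm, hg.isIdempotentElem.eq, hgv, smul_zero, add_zero]
  have star_y_mul_g : star y * g = ((√t : ℝ) : ℂ) • g := by
    simp only [star_y, add_mul, smul_mul_assoc, hg.isIdempotentElem.eq, hsvg, smul_zero, add_zero]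
  refine ⟨y * star y, ⟨?_, .mul_star_self y⟩, ?_, ?_⟩
  · rw [IsIdempotentElem, mul_assoc, ← mul_assoc (star y), star_y_mul_y, ← mul_assoc, y_mul_g]
  · have hsvv : star v * (v * star v) = star v := by
      simpa [mul_assoc] using congrArg star hv.mul_star_mul_self
    have hgvv : g * (v * star v) = 0 := by rw [← mul_assoc, hgv, zero_mul]
    rw [mul_assoc]
    congr 1
    simp only [star_y, add_mul, mul_add, smul_mul_assoc, hg.isIdempotentElem.eq, hsvg, hsvv, hgvv,
      smul_zero, add_zero, zero_add]
  · rw [← mul_assoc g, g_mul_y, mul_assoc _ (star y), star_y_mul_g, smul_mul_smul_comm, sq_t,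
      hg.isIdempotentElem.eq]

end IsOffDiagonalUnit

theorem HasProperInvolution.exists_mul_isOffDiagonalUnit {A : Type*} [Ring A] [StarRing A]
    [Algebra ℂ A] [StarModule ℂ A] [Algebra.IsIntegral ℂ A] (hA : HasProperInvolution A)
    {x : A} (hx : x * x = 0) (hx0 : x ≠ 0) : ∃ b : A, IsOffDiagonalUnit (x * b) := by
  have := (IsSelfAdjoint.star_mul_self x).isStarNormal
  obtain ⟨f, hf, hf0, c, hc, hcf⟩ :=
    hA.exists_eigenprojection (a := star x * x) (fun h => hx0 (hA x h))
  have fx : f * x = 0 := by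
    have hfc : f * (star x * x) = star c • f := by
      simpa [hf.isSelfAdjoint.star_eq, mul_assoc] using congrArg star hcf
    have := congrArg (· * x) hfc
    simpa [mul_assoc, hx, hc] using this.symm
  have star_mul_self : star (x * f) * (x * f) = c • f := by
    rw [star_mul, hf.isSelfAdjoint.star_eq, mul_assoc, ← mul_assoc (star x), hcf, mul_smul_comm,
      hf.isIdempotentElem]
  obtain ⟨r, hr, rfl⟩ := hA.exists_nonneg_of_star_mul_self_eq_smul hf hf0
    (by rw [← mul_assoc, fx, zero_mul]) star_mul_self
  have hr : 0 < r := hr.lt_of_ne' (by exact_mod_cast hc)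
  obtain ⟨d, hd⟩ := exists_smul_star_mul_self_eq hr star_mul_self
  refine ⟨d • f, ?_, ?_, fun h => hf0 ?_⟩
  · rw [mul_smul_comm, mul_assoc, hd, smul_mul_assoc, mul_assoc, hf.isIdempotentElem]
  · rw [mul_assoc, smul_mul_assoc, ← mul_assoc f, fx, zero_mul, smul_zero, mul_zero]
  · rw [← hd, ← mul_smul_comm, h, mul_zero]

end OffDiagonal

section Finiteness

theorem IsOffDiagonalUnit.star_mul_self_mul_support {R : Type*} [NonUnitalRing R] [StarRing R]
    {v : R} (hv : IsOffDiagonalUnit v) :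
    star v * v * (star v * v + v * star v) = star v * v := by
  rw [mul_add, hv.isStarProjection_star_mul_self.isIdempotentElem, ← mul_assoc,
    hv.star_mul_self_mul, zero_mul, add_zero]

theorem isSelfAdjoint_support {R : Type*} [NonUnitalRing R] [StarRing R] (v : R) :
    IsSelfAdjoint (star v * v + v * star v) :=
  (IsSelfAdjoint.star_mul_self v).add (IsSelfAdjoint.mul_star_self v)

theorem support_mul_support_eq_zero {R : Type*} [NonUnitalRing R] [StarRing R] {v w : R}
    (hvw : v * w = 0) (hwv : w * v = 0) (star_hvw : star v * w = 0) (hvw_star : v * star w = 0) :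
    (star v * v + v * star v) * (star w * w + w * star w) = 0 := by
  have star_star : star v * star w = 0 := by rw [← star_mul, hwv, star_zero]
  simp only [add_mul, mul_add, mul_assoc]
  simp only [← mul_assoc v, ← mul_assoc (star v) w, ← mul_assoc (star v) (star w), hvw, star_hvw,
    hvw_star, star_star, zero_mul, mul_zero, add_zero]

theorem IsBaerStarRing.exists_common_compression {R ι : Type*} [Ring R] [StarRing R]
    (hR : IsBaerStarRing R) {q h : ι → R} (hq : ∀ i, IsStarProjection (q i))
    (hh : ∀ i, IsSelfAdjoint (h i)) (hqh : ∀ i, q i * h i = q i)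
    (horth : Pairwise fun i j => h i * h j = 0) :
    ∃ p : R, IsStarProjection p ∧ ∀ i, p * h i = q i := by
  obtain ⟨p, hp, hqp, hpy⟩ := hR.exists_right_support (Set.range q)
  refine ⟨p, hp, fun i => ?_⟩
  have hpq : p * q i = q i := by
    simpa [hp.isSelfAdjoint.star_eq, (hq i).isSelfAdjoint.star_eq] using
      congrArg star (hqp _ ⟨i, rfl⟩)
  have hhq : h i * q i = q i := by
    simpa [(hh i).star_eq, (hq i).isSelfAdjoint.star_eq] using congrArg star (hqh i)
  have : p * (h i - q i) = 0 := by
    refine hpy _ ?_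
    rintro _ ⟨j, rfl⟩
    rw [mul_sub, sub_eq_zero]
    rcases eq_or_ne j i with rfl | hji
    · rw [hqh, (hq j).isIdempotentElem]
    · have hqh0 : q j * h i = 0 := by rw [← hqh j, mul_assoc, horth hji, mul_zero]
      rw [hqh0, ← hhq, ← mul_assoc, hqh0, zero_mul]
  rwa [mul_sub, hpq, sub_eq_zero] at this

/-- The element `a` is a product `Q * P` of two projections; on the `i`-th unit, `t i` is the
squared cosine of the angle between them. -/
theorem IsBaerStarRing.exists_forall_mul_eq_smul {A ι : Type*} [Ring A] [StarRing A]
    [Algebra ℂ A] [StarModule ℂ A] (hA : IsBaerStarRing A) {v : ι → A}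
    (hv : ∀ i, IsOffDiagonalUnit (v i)) (mul_orth : Pairwise fun i j => v i * v j = 0)
    (star_mul_orth : Pairwise fun i j => star (v i) * v j = 0)
    (mul_star_orth : Pairwise fun i j => v i * star (v j) = 0) {t : ι → ℝ}
    (ht : ∀ i, t i ∈ Set.Icc 0 1) :
    ∃ a : A, ∀ i, a * (star (v i) * v i) = (t i : ℂ) • (star (v i) * v i) := by
  let g (i : ι) : A := star (v i) * v i
  let h (i : ι) : A := star (v i) * v i + v i * star (v i)
  have hh (i : ι) : IsSelfAdjoint (h i) := isSelfAdjoint_support _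
  have hg (i : ι) : IsStarProjection (g i) := (hv i).isStarProjection_star_mul_self
  have hgh (i : ι) : g i * h i = g i := (hv i).star_mul_self_mul_support
  have horth : Pairwise fun i j => h i * h j = 0 := fun i j hij =>
    support_mul_support_eq_zero (mul_orth hij) (mul_orth hij.symm) (star_mul_orth hij)
      (mul_star_orth hij)
  choose p hp hph hgpg using fun i => (hv i).exists_rotated_projection (ht i).1 (ht i).2
  obtain ⟨P, -, hP⟩ := hA.exists_common_compression hp hh hph horth
  obtain ⟨Q, -, hQ⟩ := hA.exists_common_compression hg hh hgh horth
  have hhg (i : ι) : h i * g i = g i := by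
    simpa [(hh i).star_eq, (hg i).isSelfAdjoint.star_eq] using congrArg star (hgh i)
  have hhp (i : ι) : h i * p i = p i := by
    simpa [(hh i).star_eq, (hp i).isSelfAdjoint.star_eq] using congrArg star (hph i)
  refine ⟨Q * P, fun i => ?_⟩
  calc Q * P * g i = Q * (P * h i) * g i := by rw [mul_assoc, mul_assoc, mul_assoc, hhg]
    _ = Q * h i * p i * g i := by rw [hP, mul_assoc Q (h i), hhp]
    _ = (t i : ℂ) • g i := by rw [hQ, hgpg]

/-- Infinitely many orthogonal units would produce an element with infinitely many eigenvalues,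
which no algebraic element has. -/
theorem IsBaerStarRing.finite_of_isOffDiagonalUnit {A ι : Type*} [Ring A] [StarRing A]
    [Algebra ℂ A] [StarModule ℂ A] [Algebra.IsIntegral ℂ A] (hA : IsBaerStarRing A) {v : ι → A}
    (hv : ∀ i, IsOffDiagonalUnit (v i)) (mul_orth : Pairwise fun i j => v i * v j = 0)
    (star_mul_orth : Pairwise fun i j => star (v i) * v j = 0)
    (mul_star_orth : Pairwise fun i j => v i * star (v j) = 0) : Finite ι := by
  by_contra! hι
  let f := Infinite.natEmbedding ι
  let t : ℕ → ℝ := fun n => 1 / (n + 2)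
  have ht (n : ℕ) : t n ∈ Set.Icc 0 1 := by
    refine ⟨by positivity, div_le_one_of_le₀ ?_ ?_⟩ <;> linarith [n.cast_nonneg (α := ℝ)]
  have t_injective : Function.Injective fun n => (t n : ℂ) := fun m n hmn => by
    simpa [t] using hmn
  obtain ⟨a, ha⟩ := hA.exists_forall_mul_eq_smul (v := v ∘ f) (fun n => hv (f n))
    (mul_orth.comp_of_injective f.injective) (star_mul_orth.comp_of_injective f.injective)
    (mul_star_orth.comp_of_injective f.injective) ht
  refine Set.infinite_of_injective_forall_mem t_injective (fun n => ?_)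
    (finite_eigenvalues (Algebra.IsIntegral.isIntegral (R := ℂ) a))
  exact ⟨_, (hv (f n)).star_mul_self_ne_zero, ha n⟩

end Finiteness

section Commutative

variable {A : Type*} [Ring A] [StarRing A] [Algebra ℂ A] [StarModule ℂ A] [Algebra.IsIntegral ℂ A]

theorem HasProperInvolution.mul_eq_zero_of_mul_self_eq_zero (hA : HasProperInvolution A) {w : A}
    (hw : IsCentralProjection w) (h : ∀ v : A, IsOffDiagonalUnit v → w * v = 0) {x : A}
    (hx : x * x = 0) : w * x = 0 := by
  by_contra hwx
  have sq_zero : w * x * (w * x) = 0 := by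
    rw [mul_assoc, ← mul_assoc x, ← hw.commute x, mul_assoc w x x, hx, mul_zero, mul_zero]
  obtain ⟨b, hb⟩ := hA.exists_mul_isOffDiagonalUnit sq_zero hwx
  refine hb.ne_zero ?_
  rw [← h _ hb, ← mul_assoc, ← mul_assoc, hw.isIdempotentElem]

/-- The elements `e b (1 - e)` and `(1 - e) b e` have square zero, so `w` annihilates them and
projections commute with everything below `w`. -/
theorem HasProperInvolution.central_mul_mul_comm (hA : HasProperInvolution A) {w : A}
    (hw : IsCentralProjection w) (h : ∀ v : A, IsOffDiagonalUnit v → w * v = 0) (a b : A) :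
    w * (a * b) = w * (b * a) := by
  have corner {e : A} (he : IsIdempotentElem e) :
      w * (e * b * (1 - e)) = 0 ∧ w * ((1 - e) * b * e) = 0 := by
    refine ⟨hA.mul_eq_zero_of_mul_self_eq_zero hw h ?_,
      hA.mul_eq_zero_of_mul_self_eq_zero hw h ?_⟩
    · rw [mul_assoc, ← mul_assoc (1 - e), ← mul_assoc (1 - e), he.one_sub_mul_self,
        zero_mul, zero_mul, mul_zero]
    · rw [mul_assoc, ← mul_assoc e, ← mul_assoc e, he.mul_one_sub_self, zero_mul, zero_mul,
        mul_zero]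
  have : a ∈ Submodule.span ℂ {e : A | IsStarProjection e ∧ 1 * e = e} :=
    hA.mem_span_isStarProjection_le (.one A) (one_mul a) (mul_one a)
  induction this using Submodule.span_induction with
  | mem e he =>
    obtain ⟨h₁, h₂⟩ := corner he.1.isIdempotentElem
    rw [mul_sub, mul_one, mul_sub, sub_eq_zero] at h₁
    rw [sub_mul, sub_mul, one_mul, mul_sub, sub_eq_zero] at h₂
    rw [h₁, h₂]
  | zero => simp only [zero_mul, mul_zero]
  | add x y _ _ hx hy => rw [add_mul, mul_add, hx, hy, mul_add b, mul_add]
  | smul c x _ hx => rw [smul_mul_assoc, mul_smul_comm, hx, mul_smul_comm, mul_smul_comm]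

end Commutative

section MinimalProjection

/-- A minimal projection: a nonzero projection `g` such that `0` and `g` are the only projections
below it. -/
structure IsMinimalProjection {R : Type*} [Mul R] [Zero R] [Star R] (g : R) : Prop
    extends IsStarProjection g where
  ne_zero : g ≠ 0
  eq_zero_or_eq : ∀ e, IsStarProjection e → g * e = e → e = 0 ∨ e = g

variable {A : Type*} [Ring A] [StarRing A] [Algebra ℂ A] [StarModule ℂ A] [Algebra.IsIntegral ℂ A]

theorem IsMinimalProjection.exists_eq_smul {g : A} (hg : IsMinimalProjection g)
    (hA : HasProperInvolution A) {x : A} (gx : g * x = x) (xg : x * g = x) :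
    ∃ c : ℂ, x = c • g := by
  have : Submodule.span ℂ {e | IsStarProjection e ∧ g * e = e} ≤ Submodule.span ℂ {g} := by
    refine Submodule.span_le.2 ?_
    rintro e ⟨he, hge⟩
    obtain rfl | rfl := hg.eq_zero_or_eq e he hge
    · exact zero_mem _
    · exact Submodule.mem_span_singleton_self e
  obtain ⟨c, hc⟩ := Submodule.mem_span_singleton.1
    (this (hA.mem_span_isStarProjection_le hg.isSelfAdjoint gx xg))
  exact ⟨c, hc.symm⟩

namespace IsBaerStarRing

theorem finite_of_orthogonal_projections (hA : IsBaerStarRing A) {v : A} (hv : IsOffDiagonalUnit v)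
    {ι : Type*} {d : ι → A} (hd : ∀ i, IsStarProjection (d i)) (hd0 : ∀ i, d i ≠ 0)
    (hvd : ∀ i, star v * v * d i = d i) (horth : Pairwise fun i j => d i * d j = 0) :
    Finite ι := by
  have hdv (i : ι) : d i * v = 0 := by
    have : d i * (star v * v) = d i := by
      simpa [(hd i).isSelfAdjoint.star_eq, mul_assoc] using congrArg star (hvd i)
    rw [← this, mul_assoc, hv.star_mul_self_mul, mul_zero]
  refine hA.finite_of_isOffDiagonalUnit
    (fun i => (hv.mul_projection (hd i) (hd0 i) (hvd i)).1) ?_ ?_ ?_ <;> intro i j hij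
  · rw [mul_assoc, ← mul_assoc (d i), hdv, zero_mul, mul_zero]
  · rw [star_mul, (hd i).isSelfAdjoint.star_eq, mul_assoc, ← mul_assoc (star v), hvd, horth hij]
  · rw [star_mul, (hd j).isSelfAdjoint.star_eq, mul_assoc, ← mul_assoc (d i), horth hij, zero_mul,
      mul_zero]

/-- Otherwise the differences of an infinite strictly decreasing sequence of projections would
contradict `IsBaerStarRing.finite_of_orthogonal_projections`. -/
theorem exists_isMinimalProjection (hA : IsBaerStarRing A) {v : A} (hv : IsOffDiagonalUnit v) :
    ∃ g : A, IsMinimalProjection g ∧ star v * v * g = g := by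
  by_contra! h
  let X := {e : A // IsStarProjection e ∧ e ≠ 0 ∧ star v * v * e = e}
  have exists_lt (e : X) : ∃ f : X, e.1 * f.1 = f.1 ∧ f.1 ≠ e.1 := by
    obtain ⟨e, he, he0, hve⟩ := e
    by_contra! hmin
    refine h e ⟨he, he0, fun f hf hef => or_iff_not_imp_left.2 fun hf0 => ?_⟩ hve
    exact hmin ⟨f, hf, hf0, by rw [← hef, ← mul_assoc, hve]⟩ hef
  choose next mul_next next_ne using exists_lt
  let e (n : ℕ) : X :=
    next^[n] ⟨star v * v, hv.isStarProjection_star_mul_self, hv.star_mul_self_ne_zero,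
      hv.isStarProjection_star_mul_self.isIdempotentElem⟩
  have e_succ (n : ℕ) : e (n + 1) = next (e n) := Function.iterate_succ_apply' next n _
  have e_mul_e {m n : ℕ} (hmn : m ≤ n) : (e m).1 * (e n).1 = (e n).1 := by
    induction n, hmn using Nat.le_induction with
    | base => exact (e m).2.1.isIdempotentElem
    | succ n _ ih => rw [e_succ, ← mul_next, ← mul_assoc, ih]
  let d (n : ℕ) : A := (e n).1 - (e (n + 1)).1
  have hd (n : ℕ) : IsStarProjection (d n) :=
    (e (n + 1)).2.1.sub_of_mul_eq_right (e n).2.1 (e_mul_e n.le_succ)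
  have d_mul_d {m n : ℕ} (hmn : m < n) : d m * d n = 0 := by
    simp only [d, sub_mul, mul_sub]
    rw [e_mul_e hmn.le, e_mul_e (by lia : m ≤ n + 1), e_mul_e (by lia : m + 1 ≤ n),
      e_mul_e (by lia : m + 1 ≤ n + 1), sub_self, sub_self, sub_zero]
  refine not_finite_iff_infinite.2 inferInstance (hA.finite_of_orthogonal_projections hv hd
    (fun n hn => ?_) (fun n => ?_) fun m n hmn => ?_)
  · exact next_ne (e n) (by rw [← e_succ, sub_eq_zero.1 hn])
  · rw [mul_sub, (e n).2.2.2, (e (n + 1)).2.2.2]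
  · rcases hmn.lt_or_gt with hmn | hnm
    · exact d_mul_d hmn
    · simpa [(hd m).isSelfAdjoint.star_eq, (hd n).isSelfAdjoint.star_eq] using
        congrArg star (d_mul_d hnm)

end IsBaerStarRing

end MinimalProjection

section OrthonormalFamily

/-- An orthonormal family in the left ideal `A g`, for the `g A g`-valued inner product
`(x, y) ↦ x* y`. For a minimal projection `g` the ideal `A g` plays the role of the Hilbert space
on which the matrix block containing `g` acts. -/
structure IsOrthonormalFamily {R ι : Type*} [Mul R] [Zero R] [Star R] (g : R) (b : ι → R) :
    Prop where
  mul_right (i : ι) : b i * g = b i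
  star_mul_self (i : ι) : star (b i) * b i = g
  star_mul_of_ne : Pairwise fun i j => star (b i) * b j = 0

namespace IsOrthonormalFamily

theorem comp_injective {R ι κ : Type*} [Mul R] [Zero R] [Star R] {g : R} {b : ι → R}
    (hb : IsOrthonormalFamily g b) {f : κ → ι} (hf : f.Injective) :
    IsOrthonormalFamily g (b ∘ f) where
  mul_right i := hb.mul_right (f i)
  star_mul_self i := hb.star_mul_self (f i)
  star_mul_of_ne _ _ hij := hb.star_mul_of_ne (hf.ne hij)

section Ring

variable {R ι : Type*} [NonUnitalRing R] [StarRing R] {g : R} {b : ι → R}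

theorem insert {s : Set R} (hs : IsOrthonormalFamily g ((↑) : s → R)) {x : R}
    (xg : x * g = x) (hx : star x * x = g) (hsx : ∀ b ∈ s, star b * x = 0) :
    IsOrthonormalFamily g ((↑) : ↥(insert x s) → R) where
  mul_right := by
    rintro ⟨_, rfl | hb⟩
    exacts [xg, hs.mul_right ⟨_, hb⟩]
  star_mul_self := by
    rintro ⟨_, rfl | hb⟩
    exacts [hx, hs.star_mul_self ⟨_, hb⟩]
  star_mul_of_ne := by
    have hxs {b : R} (hb : b ∈ s) : star x * b = 0 := by simpa using congrArg star (hsx b hb)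
    rintro ⟨_, rfl | hb⟩ ⟨_, rfl | hc⟩ hbc
    · exact absurd rfl hbc
    · exact hxs hc
    · exact hsx _ hb
    · exact hs.star_mul_of_ne (i := ⟨_, hb⟩) (j := ⟨_, hc⟩) fun h =>
        hbc (Subtype.ext (congrArg Subtype.val h :))

theorem exists_maximal {s : Set R} (hs : IsOrthonormalFamily g ((↑) : s → R)) :
    ∃ t : Set R, s ⊆ t ∧ Maximal (fun t : Set R => IsOrthonormalFamily g ((↑) : t → R)) t := by
  refine zorn_subset_nonempty {t : Set R | IsOrthonormalFamily g ((↑) : t → R)}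
    (fun c hc chain _ => ⟨⋃₀ c, ⟨?_, ?_, ?_⟩, fun s => Set.subset_sUnion_of_mem⟩) s hs
  · rintro ⟨x, t, ht, hx⟩
    exact (hc ht).mul_right ⟨x, hx⟩
  · rintro ⟨x, t, ht, hx⟩
    exact (hc ht).star_mul_self ⟨x, hx⟩
  · refine (pairwise_subtype_iff_pairwise_set _ fun x y : R => star x * y = 0).2 ?_
    refine (Set.pairwise_sUnion chain.directedOn).2 fun t ht => ?_
    exact (pairwise_subtype_iff_pairwise_set t fun x y : R => star x * y = 0).1
      (hc ht).star_mul_of_ne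

theorem isStarProjection (hb : IsOrthonormalFamily g b) (i : ι) : IsStarProjection g where
  isIdempotentElem := by
    calc g * g = star (b i) * (b i * g) := by rw [← mul_assoc, hb.star_mul_self]
      _ = g := by rw [hb.mul_right, hb.star_mul_self]
  isSelfAdjoint := hb.star_mul_self i ▸ .star_mul_self _

theorem matrixUnit_mul (hb : IsOrthonormalFamily g b) (i j k : ι) :
    b i * star (b j) * (b j * star (b k)) = b i * star (b k) := by
  rw [mul_assoc, ← mul_assoc (star (b j)), hb.star_mul_self, ← mul_assoc, hb.mul_right]

theorem matrixUnit_mul_of_ne (hb : IsOrthonormalFamily g b) {i j k l : ι} (hjk : j ≠ k) :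
    b i * star (b j) * (b k * star (b l)) = 0 := by
  rw [mul_assoc, ← mul_assoc (star (b j)), hb.star_mul_of_ne hjk, zero_mul, mul_zero]

theorem star_mul_matrixUnit_mul (hb : IsOrthonormalFamily g b) (i j : ι) :
    star (b i) * (b i * star (b j)) * b j = g := by
  rw [← mul_assoc, mul_assoc, hb.star_mul_self, hb.star_mul_self,
    (hb.isStarProjection i).isIdempotentElem]

theorem isOffDiagonalUnit (hb : IsOrthonormalFamily g b) (hg : g ≠ 0) {i j : ι} (hij : i ≠ j) :
    IsOffDiagonalUnit (b i * star (b j)) where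
  mul_star_mul_self := by
    rw [star_mul, star_star, hb.matrixUnit_mul, hb.matrixUnit_mul]
  mul_self := hb.matrixUnit_mul_of_ne hij.symm
  ne_zero h := hg <| by rw [← hb.star_mul_matrixUnit_mul i j, h, mul_zero, zero_mul]

end Ring

theorem finite {A ι : Type*} [Ring A] [StarRing A] [Algebra ℂ A] [StarModule ℂ A]
    [Algebra.IsIntegral ℂ A] {g : A} {b : ι → A} (hb : IsOrthonormalFamily g b)
    (hA : IsBaerStarRing A) (hg : g ≠ 0) : Finite ι := by
  by_contra! hι
  let f := Infinite.natEmbedding ι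
  have ne {m n : ℕ} (hmn : m ≠ n) : f m ≠ f n := f.injective.ne hmn
  refine not_finite_iff_infinite.2 inferInstance (hA.finite_of_isOffDiagonalUnit
    (v := fun n : ℕ => b (f (2 * n)) * star (b (f (2 * n + 1))))
    (fun n => hb.isOffDiagonalUnit hg (ne (by lia))) ?_ ?_ ?_) <;> intro m n hmn
  · exact hb.matrixUnit_mul_of_ne (ne (by lia))
  · rw [star_mul, star_star]
    exact hb.matrixUnit_mul_of_ne (ne (by lia))
  · rw [star_mul, star_star]
    exact hb.matrixUnit_mul_of_ne (ne (by lia))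

end IsOrthonormalFamily

/-- An orthonormal basis of the left ideal `A g`: an orthonormal family satisfying Parseval's
identity. The elements `b i * star (b j)` are then matrix units of a direct summand. -/
structure IsOrthonormalBasis {R ι : Type*} [Fintype ι] [NonUnitalNonAssocSemiring R] [Star R]
    (g : R) (b : ι → R) : Prop extends IsOrthonormalFamily g b where
  sum_mul_eq (x : R) : x * g = x → (∑ i, b i * star (b i)) * x = x

namespace IsMinimalProjection

variable {A : Type*} [Ring A] [StarRing A] [Algebra ℂ A] [StarModule ℂ A] [Algebra.IsIntegral ℂ A]
  {g : A}

/-- The part of `x ∈ A g` orthogonal to a maximal orthonormal family would, after normalization,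
extend the family. -/
theorem sum_mul_eq_of_maximal (hg : IsMinimalProjection g) (hA : HasProperInvolution A)
    {s : Finset A} (hs : Maximal (fun t : Set A => IsOrthonormalFamily g ((↑) : t → A)) s)
    (hgs : g ∈ s) {x : A} (xg : x * g = x) : (∑ b ∈ s, b * star b) * x = x := by
  let y := x - (∑ b ∈ s, b * star b) * x
  have yg : y * g = y := by simp only [y, sub_mul, mul_assoc, xg]
  have star_mul_y {b : A} (hb : b ∈ s) : star b * y = 0 := by
    have hbg : g * star b = star b := by
      simpa [hg.isSelfAdjoint.star_eq] using congrArg star (hs.prop.mul_right ⟨b, hb⟩)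
    have hbc (c : A) (hc : c ∈ s) (hcb : c ≠ b) : star b * c = 0 :=
      hs.prop.star_mul_of_ne (i := ⟨b, hb⟩) (j := ⟨c, hc⟩) (by simpa using hcb.symm)
    rw [mul_sub, ← mul_assoc, Finset.mul_sum, Finset.sum_eq_single_of_mem b hb, ← mul_assoc,
      hs.prop.star_mul_self ⟨b, hb⟩, hbg, sub_self]
    intro c hc hcb
    rw [← mul_assoc, hbc c hc hcb, zero_mul]
  have gy : g * y = 0 := by simpa [hg.isSelfAdjoint.star_eq] using star_mul_y hgs
  have gsy : g * star y = star y := by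
    simpa [hg.isSelfAdjoint.star_eq] using congrArg star yg
  obtain ⟨c, hc⟩ := hg.exists_eq_smul hA (x := star y * y) (by rw [← mul_assoc, gsy])
    (by rw [mul_assoc, yg])
  obtain ⟨r, hr, rfl⟩ := hA.exists_nonneg_of_star_mul_self_eq_smul hg.toIsStarProjection hg.ne_zero
    gy hc
  suffices r = 0 from (sub_eq_zero.1 (hA y (by rw [hc, this, Complex.ofReal_zero, zero_smul]))).symm
  by_contra hr0
  obtain ⟨d, hd⟩ := exists_smul_star_mul_self_eq (hr.lt_of_ne' hr0) hc
  have hs' := hs.prop.insert (x := d • y) (by rw [smul_mul_assoc, yg]) hd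
    (fun b hb => by rw [mul_smul_comm, star_mul_y hb, smul_zero])
  have mem : d • y ∈ s := hs.le_of_ge hs' (Set.subset_insert _ _) (Set.mem_insert _ _)
  refine hg.ne_zero ?_
  rw [← hd, mul_smul_comm, star_mul_y mem, smul_zero]

theorem exists_isOrthonormalBasis (hg : IsMinimalProjection g) (hA : IsBaerStarRing A) {v : A}
    (hv : IsOffDiagonalUnit v) (hvg : star v * v * g = g) :
    ∃ n ≥ 2, ∃ b : Fin n → A, IsOrthonormalBasis g b := by
  have gvg : g * (v * g) = 0 := by
    have : g * (star v * v) = g := by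
      simpa [hg.isSelfAdjoint.star_eq, mul_assoc] using congrArg star hvg
    rw [← mul_assoc, ← this, mul_assoc g, hv.star_mul_self_mul, mul_zero, zero_mul]
  have ne : g ≠ v * g := fun h => hg.ne_zero <| by
    rw [← hg.isIdempotentElem.eq]
    nth_rw 2 [h]
    exact gvg
  have singleton : IsOrthonormalFamily g ((↑) : ({g} : Set A) → A) := by
    refine ⟨?_, ?_, fun b c hbc => absurd (Subsingleton.elim b c) hbc⟩ <;> rintro ⟨_, rfl⟩
    · exact hg.isIdempotentElem
    · rw [hg.isSelfAdjoint.star_eq, hg.isIdempotentElem]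
  have pair : IsOrthonormalFamily g ((↑) : ↥({v * g, g} : Set A) → A) := by
    refine singleton.insert (by rw [mul_assoc, hg.isIdempotentElem])
      (hv.mul_projection hg.toIsStarProjection hg.ne_zero hvg).2 ?_
    rintro _ rfl
    rw [hg.isSelfAdjoint.star_eq, gvg]
  obtain ⟨t, ht, hmax⟩ := pair.exists_maximal
  have : Finite t := hmax.prop.finite hA hg.ne_zero
  obtain ⟨s, rfl⟩ := t.toFinite.exists_finset_coe
  let e : Fin s.card ≃ s := s.equivFin.symm
  refine ⟨s.card, Finset.one_lt_card.2 ⟨g, ht (by simp), v * g, ht (by simp), ne⟩, fun i => e i,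
    ⟨hmax.prop.comp_injective e.injective, fun x xg => ?_⟩⟩
  rw [e.sum_comp fun b => (b : A) * star (b : A), s.sum_coe_sort fun b => b * star b]
  exact hg.sum_mul_eq_of_maximal hA.hasProperInvolution hmax (ht (by simp)) xg

end IsMinimalProjection

end OrthonormalFamily

section MatrixRepresentation

theorem IsOrthonormalFamily.star_mul_eq_ite {R ι : Type*} [DecidableEq ι] [Mul R] [Zero R] [Star R]
    {g : R} {b : ι → R} (hb : IsOrthonormalFamily g b) (i j : ι) :
    star (b i) * b j = if i = j then g else 0 := by
  split_ifs with h
  · rw [← h, hb.star_mul_self]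
  · exact hb.star_mul_of_ne h

namespace IsOrthonormalBasis

section Ring

variable {R ι : Type*} [Fintype ι] [NonUnitalRing R] [StarRing R] {g : R} {b : ι → R}

theorem mul_star_mul (hb : IsOrthonormalBasis g b) (i : ι) : g * star (b i) = star (b i) := by
  simpa [(hb.isStarProjection i).isSelfAdjoint.star_eq] using congrArg star (hb.mul_right i)

theorem star_mul_sum (hb : IsOrthonormalBasis g b) (i : ι) :
    star (b i) * ∑ j, b j * star (b j) = star (b i) := by
  rw [Finset.mul_sum, Finset.sum_eq_single i, ← mul_assoc, hb.star_mul_self, hb.mul_star_mul]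
  · intro j _ hji
    rw [← mul_assoc, hb.star_mul_of_ne hji.symm, zero_mul]
  · exact fun hi => absurd (Finset.mem_univ i) hi

theorem isCentralProjection (hb : IsOrthonormalBasis g b) :
    IsCentralProjection (∑ i, b i * star (b i)) := by
  have hsa : IsSelfAdjoint (∑ i, b i * star (b i)) :=
    isSelfAdjoint_sum _ fun i _ => .mul_star_self (b i)
  have sum_mul_mul_sum (a : R) :
      (∑ i, b i * star (b i)) * (a * ∑ i, b i * star (b i)) = a * ∑ i, b i * star (b i) := by
    rw [Finset.mul_sum _ _ a, Finset.mul_sum]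
    refine Finset.sum_congr rfl fun i _ => ?_
    rw [← mul_assoc a, ← mul_assoc, hb.sum_mul_eq (a * b i) (by rw [mul_assoc, hb.mul_right])]
  refine ⟨⟨?_, hsa⟩, fun a => ?_⟩
  · simp_rw [IsIdempotentElem, Finset.sum_mul, mul_assoc, hb.star_mul_sum]
  · have := congrArg star (sum_mul_mul_sum (star a))
    simp only [star_mul, star_star, hsa.star_eq] at this
    rw [Commute, SemiconjBy, ← this, mul_assoc, sum_mul_mul_sum]

end Ring

variable {A ι : Type*} [Fintype ι] [Ring A] [StarRing A] [Algebra ℂ A] {g : A} {b : ι → A}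

theorem exists_starAlgHom [DecidableEq ι] [StarModule ℂ A] [Algebra.IsIntegral ℂ A]
    (hb : IsOrthonormalBasis g b) (hg : IsMinimalProjection g) (hA : HasProperInvolution A) :
    ∃ φ : A →⋆ₐ[ℂ] Matrix ι ι ℂ, ∀ a i j, star (b i) * a * b j = φ a i j • g := by
  have exists_coeff (a : A) (i j : ι) : ∃ c : ℂ, star (b i) * a * b j = c • g :=
    hg.exists_eq_smul hA (by rw [← mul_assoc, ← mul_assoc, hb.mul_star_mul])
      (by rw [mul_assoc, hb.mul_right])
  choose c hc using exists_coeff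
  let φ (a : A) : Matrix ι ι ℂ := Matrix.of (c a)
  have hφ (a : A) (i j : ι) : star (b i) * a * b j = φ a i j • g := hc a i j
  have ext {M N : Matrix ι ι ℂ} (h : ∀ i j, M i j • g = N i j • g) : M = N :=
    Matrix.ext fun i j => smul_left_injective ℂ hg.ne_zero (h i j)
  have map_add (a a' : A) : φ (a + a') = φ a + φ a' := ext fun i j => by
    rw [Matrix.add_apply, add_smul, ← hφ, ← hφ, ← hφ, mul_add, add_mul]
  have map_smul (r : ℂ) (a : A) : φ (r • a) = r • φ a := ext fun i j => by
    rw [Matrix.smul_apply, smul_assoc, ← hφ, ← hφ, mul_smul_comm, smul_mul_assoc]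
  have map_one : φ 1 = 1 := ext fun i j => by
    rw [← hφ, mul_one, hb.star_mul_eq_ite, Matrix.one_apply, ite_smul, one_smul, zero_smul]
  have map_mul (a a' : A) : φ (a * a') = φ a * φ a' := ext fun i j => by
    have expand : a' * b j = (∑ k, b k * star (b k)) * (a' * b j) :=
      (hb.sum_mul_eq _ (by rw [mul_assoc, hb.mul_right])).symm
    rw [← hφ, Matrix.mul_apply, Finset.sum_smul, mul_assoc, mul_assoc, expand, Finset.sum_mul,
      Finset.mul_sum, Finset.mul_sum]
    refine Finset.sum_congr rfl fun k _ => ?_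
    calc star (b i) * (a * (b k * star (b k) * (a' * b j)))
        = star (b i) * a * b k * (star (b k) * a' * b j) := by simp only [mul_assoc]
      _ = (φ a i k * φ a' k j) • g := by
        rw [hφ, hφ, smul_mul_smul_comm, hg.isIdempotentElem.eq]
  have map_star (a : A) : φ (star a) = star (φ a) := ext fun i j => by
    rw [← hφ, Matrix.star_apply, ← hg.isSelfAdjoint.star_eq, ← star_smul, ← hφ, star_mul, star_mul,
      star_star, mul_assoc]
  let f : A →ₗ[ℂ] Matrix ι ι ℂ := ⟨⟨φ, map_add⟩, map_smul⟩
  exact ⟨⟨AlgHom.ofLinearMap f map_one map_mul, map_star⟩, hφ⟩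

theorem surjective_of_coeff (hb : IsOrthonormalBasis g b) (hg : g ≠ 0) {φ : A → Matrix ι ι ℂ}
    (hφ : ∀ a i j, star (b i) * a * b j = φ a i j • g) : Function.Surjective φ := by
  classical
  intro M
  refine ⟨∑ k, ∑ l, M k l • (b k * star (b l)), ?_⟩
  ext i j
  refine smul_left_injective ℂ hg ?_
  have apply_unit (k l : ι) : star (b i) * (b k * star (b l)) * b j =
      if k = i then if l = j then g else 0 else 0 := by
    rw [← mul_assoc, mul_assoc, hb.star_mul_eq_ite, hb.star_mul_eq_ite, eq_comm (a := i)]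
    split_ifs <;> simp only [(hb.isStarProjection i).isIdempotentElem.eq, mul_zero, zero_mul]
  simp only [← hφ, Finset.mul_sum, Finset.sum_mul, mul_smul_comm, smul_mul_assoc, apply_unit,
    smul_ite, smul_zero, Finset.sum_ite_irrel, Finset.sum_const_zero, Finset.sum_ite_eq',
    Finset.mem_univ, if_true]

theorem coeff_eq_zero_iff (hb : IsOrthonormalBasis g b) (hg : g ≠ 0) {φ : A → Matrix ι ι ℂ}
    (hφ : ∀ a i j, star (b i) * a * b j = φ a i j • g) (a : A) :
    φ a = 0 ↔ (∑ i, b i * star (b i)) * a = 0 := by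
  refine ⟨fun h => ?_, fun h => ?_⟩
  · have mul_basis (j : ι) : a * b j = 0 := by
      rw [← hb.sum_mul_eq (a * b j) (by rw [mul_assoc, hb.mul_right]), Finset.sum_mul]
      refine Finset.sum_eq_zero fun i _ => ?_
      rw [mul_assoc, ← mul_assoc (star (b i)), hφ, h, Matrix.zero_apply, zero_smul, mul_zero]
    rw [hb.isCentralProjection.commute, Finset.mul_sum]
    exact Finset.sum_eq_zero fun j _ => by rw [← mul_assoc, mul_basis, zero_mul]
  · ext i j
    refine smul_left_injective ℂ hg ?_
    simp only [← hφ, Matrix.zero_apply, zero_smul]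
    rw [← hb.star_mul_sum, mul_assoc _ _ a, h, mul_zero, zero_mul]

end IsOrthonormalBasis

end MatrixRepresentation

section MatrixBlocks

/-- A central projection whose direct summand is a full matrix algebra of size at least two. The
summand is encoded by a surjection of the whole algebra with kernel the complementary summand. -/
structure IsMatrixBlock {A : Type*} [Ring A] [StarRing A] [Algebra ℂ A] (c : A) : Prop
    extends IsCentralProjection c where
  exists_rep : ∃ n ≥ 2, ∃ φ : A →⋆ₐ[ℂ] Matrix (Fin n) (Fin n) ℂ, Function.Surjective φ ∧
    ∀ a, φ a = 0 ↔ c * a = 0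

variable {A : Type*} [Ring A] [StarRing A] [Algebra ℂ A]

theorem IsMatrixBlock.mul_eq_zero_or_eq {c d : A} (hc : IsMatrixBlock c)
    (hd : IsCentralProjection d) : c * d = 0 ∨ c * d = c := by
  obtain ⟨n, hn, φ, hφ, hker⟩ := hc.exists_rep
  have : Nonempty (Fin n) := ⟨0, by lia⟩
  obtain ⟨r, hr⟩ : φ d ∈ Set.range (Matrix.scalar (Fin n)) := by
    refine Matrix.mem_range_scalar_iff_commute_single'.2 fun i j => ?_
    obtain ⟨a, ha⟩ := hφ (Matrix.single i j 1)
    rw [← ha]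
    exact ((hd.commute a).map φ).symm
  have : r * r = r := (Matrix.scalar_inj (n := Fin n)).1 <| by
    rw [map_mul, hr, ← map_mul, hd.isIdempotentElem]
  rcases IsIdempotentElem.iff_eq_zero_or_one.1 this with rfl | rfl
  · exact .inl ((hker d).1 (by rw [← hr, map_zero]))
  · refine .inr ?_
    have := (hker (1 - d)).1 (by rw [map_sub, ← hr, map_one, map_one, sub_self])
    rwa [mul_sub, mul_one, sub_eq_zero, eq_comm] at this

theorem IsMatrixBlock.mul_eq_zero_of_ne {c d : A} (hc : IsMatrixBlock c) (hd : IsMatrixBlock d)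
    (hcd : c ≠ d) : c * d = 0 := by
  rcases hc.mul_eq_zero_or_eq hd.toIsCentralProjection with h | h
  · exact h
  rcases hd.mul_eq_zero_or_eq hc.toIsCentralProjection with h' | h'
  · rw [hc.commute, h']
  · exact absurd (by rw [← h, hc.commute, h']) hcd

theorem IsOffDiagonalUnit.central_mul {R : Type*} [NonUnitalRing R] [StarRing R] {v w : R}
    (hv : IsOffDiagonalUnit v) (hw : IsCentralProjection w) (hwv : w * v ≠ 0) :
    IsOffDiagonalUnit (w * v) := by
  refine ⟨?_, ?_, hwv⟩
  · rw [star_mul, hw.isSelfAdjoint.star_eq, ← hw.commute (star v),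
      (hw.commute v).symm.mul_mul_mul_comm, hw.isIdempotentElem.eq,
      (hw.commute _).symm.mul_mul_mul_comm, hw.isIdempotentElem.eq, hv.mul_star_mul_self]
  · rw [(hw.commute v).symm.mul_mul_mul_comm, hv.mul_self, mul_zero]

theorem IsMatrixBlock.exists_isOffDiagonalUnit [StarModule ℂ A] [Algebra.IsIntegral ℂ A] {c : A}
    (hc : IsMatrixBlock c) (hA : HasProperInvolution A) :
    ∃ v : A, IsOffDiagonalUnit v ∧ c * v = v := by
  obtain ⟨n, hn, φ, hφ, hker⟩ := hc.exists_rep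
  let i : Fin n := ⟨0, by lia⟩
  let j : Fin n := ⟨1, by lia⟩
  have hij : j ≠ i := by simp [i, j]
  obtain ⟨a, ha⟩ := hφ (Matrix.single i j 1)
  have sq_zero : c * a * (c * a) = 0 := by
    have := (hker (a * a)).1 (by rw [map_mul, ha, Matrix.single_mul_single_of_ne _ _ _ _ hij])
    rw [(hc.commute a).symm.mul_mul_mul_comm, hc.isIdempotentElem.eq, this]
  have ne_zero : c * a ≠ 0 := fun h => by
    rw [← hker, ha] at h
    simpa using congrFun₂ h i j
  obtain ⟨b, hb⟩ := hA.exists_mul_isOffDiagonalUnit sq_zero ne_zero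
  exact ⟨_, hb, by rw [← mul_assoc, ← mul_assoc, hc.isIdempotentElem]⟩

variable [StarModule ℂ A] [Algebra.IsIntegral ℂ A]

theorem IsBaerStarRing.finite_isMatrixBlock (hA : IsBaerStarRing A) :
    {c : A | IsMatrixBlock c}.Finite := by
  choose v hv hcv using fun c : {c : A | IsMatrixBlock c} =>
    c.2.exists_isOffDiagonalUnit hA.hasProperInvolution
  have mul_eq_zero {c d : {c : A | IsMatrixBlock c}} (hcd : c ≠ d) {x y : A}
      (hx : c.1 * x = x) (hy : d.1 * y = y) : x * y = 0 := by
    rw [← hx, ← hy, c.2.commute x, mul_assoc, ← mul_assoc c.1,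
      c.2.mul_eq_zero_of_ne d.2 (Subtype.coe_ne_coe.2 hcd), zero_mul, mul_zero]
  have hcv_star (c : {c : A | IsMatrixBlock c}) : c.1 * star (v c) = star (v c) :=
    star_mem (s := c.2.corner ℂ) (hcv c)
  exact hA.finite_of_isOffDiagonalUnit hv
    (fun c d hcd => mul_eq_zero hcd (hcv c) (hcv d))
    (fun c d hcd => mul_eq_zero hcd (hcv_star c) (hcv d))
    fun c d hcd => mul_eq_zero hcd (hcv c) (hcv_star d)

theorem IsBaerStarRing.exists_isMatrixBlock (hA : IsBaerStarRing A) {v : A}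
    (hv : IsOffDiagonalUnit v) : ∃ c : A, IsMatrixBlock c ∧ c * v ≠ 0 := by
  obtain ⟨g, hg, hvg⟩ := hA.exists_isMinimalProjection hv
  obtain ⟨n, hn, b, hb⟩ := hg.exists_isOrthonormalBasis hA hv hvg
  obtain ⟨φ, hφ⟩ := hb.exists_starAlgHom hg hA.hasProperInvolution
  refine ⟨_, ⟨hb.isCentralProjection, n, hn, φ, hb.surjective_of_coeff hg.ne_zero hφ,
    hb.coeff_eq_zero_iff hg.ne_zero hφ⟩, fun h => ?_⟩
  obtain ⟨hvg, -⟩ := hv.mul_projection hg.toIsStarProjection hg.ne_zero hvg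
  refine hvg.ne_zero ?_
  rw [← hb.sum_mul_eq (v * g) (by rw [mul_assoc, hg.isIdempotentElem]), ← mul_assoc, h, zero_mul]

theorem isCentralProjection_one_sub_sum {R ι : Type*} [Ring R] [StarRing R] {c : ι → R}
    (hc : ∀ i, IsCentralProjection (c i)) (horth : OrthogonalIdempotents c) (s : Finset ι) :
    IsCentralProjection (1 - ∑ i ∈ s, c i) where
  toIsStarProjection :=
    (IsStarProjection.mk horth.isIdempotentElem_sum
      (isSelfAdjoint_sum _ fun i _ => (hc i).isSelfAdjoint)).one_sub
  commute a := (Commute.one_left a).sub_left (Commute.sum_left _ _ _ fun i _ => (hc i).commute a)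

/-- The `*`-homomorphism into a product with given components. -/
def starAlgHomPi {k A ι : Type*} {B : ι → Type*} [CommSemiring k] [Semiring A] [Algebra k A]
    [Star A] [∀ i, Semiring (B i)] [∀ i, Algebra k (B i)] [∀ i, Star (B i)]
    (φ : ∀ i, A →⋆ₐ[k] B i) : A →⋆ₐ[k] ∀ i, B i :=
  { AlgHom.pi fun i => (φ i).toAlgHom with
    map_star' := fun a => funext fun i => map_star (φ i) a }

theorem IsBaerStarRing.exists_matrix_decomposition (hA : IsBaerStarRing A) :
    ∃ (m : ℕ) (n : Fin m → ℕ) (φ : A →⋆ₐ[ℂ] ∀ k, Matrix (Fin (n k)) (Fin (n k)) ℂ) (w : A),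
      (∀ k, 2 ≤ n k) ∧ Function.Surjective φ ∧ IsCentralProjection w ∧
        (∀ a, φ a = 0 ↔ w * a = a) ∧ ∀ v, IsOffDiagonalUnit v → w * v = 0 := by
  obtain ⟨s, hs⟩ := hA.finite_isMatrixBlock.exists_finset
  let c (k : Fin s.card) : A := s.equivFin.symm k
  have hc (k : Fin s.card) : IsMatrixBlock (c k) := (hs _).1 (s.equivFin.symm k).2
  have horth : OrthogonalIdempotents c := ⟨fun k => (hc k).isIdempotentElem, fun k l hkl =>
    (hc k).mul_eq_zero_of_ne (hc l) fun h => hkl (s.equivFin.symm.injective (Subtype.ext h))⟩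
  choose n hn φ φ_surj φ_ker using fun k => (hc k).exists_rep
  have φ_c (k : Fin s.card) (a : A) : φ k (c k * a) = φ k a := by
    rw [← sub_eq_zero, ← map_sub, φ_ker, mul_sub, ← mul_assoc, (hc k).isIdempotentElem, sub_self]
  have φ_c_ne {k l : Fin s.card} (hkl : k ≠ l) (a : A) : φ k (c l * a) = 0 := by
    rw [φ_ker, ← mul_assoc, horth.ortho hkl, zero_mul]
  let w := 1 - ∑ k, c k
  have c_mul_w (k : Fin s.card) : c k * w = 0 := by
    rw [mul_sub, horth.mul_sum_of_mem (Finset.mem_univ k), mul_one, sub_self]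
  have hw : IsCentralProjection w :=
    isCentralProjection_one_sub_sum (fun k => (hc k).toIsCentralProjection) horth _
  refine ⟨s.card, n, starAlgHomPi φ, w, hn, fun M => ?_, hw, fun a => ⟨fun h => ?_, fun h => ?_⟩,
    fun v hv => ?_⟩
  · choose a ha using fun k => φ_surj k (M k)
    refine ⟨∑ k, c k * a k, funext fun k => ?_⟩
    change φ k _ = _
    rw [map_sum, Finset.sum_eq_single k (fun l _ hlk => φ_c_ne hlk.symm _)
      (fun hk => absurd (Finset.mem_univ k) hk), φ_c, ha]
  · have hca (k : Fin s.card) : c k * a = 0 := (φ_ker k a).1 (congrFun h k)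
    rw [sub_mul, one_mul, Finset.sum_mul, Finset.sum_eq_zero fun k _ => hca k, sub_zero]
  · refine funext fun k => (φ_ker k a).2 ?_
    rw [← h, ← mul_assoc, c_mul_w, zero_mul]
  · by_contra hwv
    obtain ⟨d, hd, hdv⟩ := hA.exists_isMatrixBlock (hv.central_mul hw hwv)
    obtain ⟨k, hk⟩ := s.equivFin.symm.surjective ⟨d, (hs d).2 hd⟩
    refine hdv ?_
    have : d = c k := congrArg Subtype.val hk.symm
    rw [this, ← mul_assoc, c_mul_w, zero_mul]

end MatrixBlocks

section GelfandTransform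

theorem eq_zero_iff_forall_mem_primeSpectrum {R : Type*} [CommRing R] [IsReduced R] {x : R} :
    x = 0 ↔ ∀ p : PrimeSpectrum R, x ∈ p.asIdeal := by
  rw [← isNilpotent_iff_eq_zero, nilpotent_iff_mem_prime]
  exact ⟨fun h p => h _ p.isPrime, fun h J hJ => h ⟨J, hJ⟩⟩

variable (k : Type*) {B : Type*} [Field k] [IsAlgClosed k] [CommRing B] [Algebra k B]
  [Algebra.IsIntegral k B]

/-- The character with kernel a given prime ideal, for an integral algebra over an algebraically
closed field: the residue ring is then the field itself. -/
noncomputable def primeCharacter (p : PrimeSpectrum B) : B →ₐ[k] k :=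
  ((AlgEquiv.ofBijective (Algebra.ofId k (B ⧸ p.asIdeal))
    IsAlgClosed.algebraMap_bijective_of_isIntegral).symm : (B ⧸ p.asIdeal) →ₐ[k] k).comp
    (Ideal.Quotient.mkₐ k p.asIdeal)

variable {k}

theorem primeCharacter_eq_zero_iff {p : PrimeSpectrum B} {b : B} :
    primeCharacter k p b = 0 ↔ b ∈ p.asIdeal := by
  simp [primeCharacter, Ideal.Quotient.eq_zero_iff_mem]

theorem primeCharacter_injective :
    Function.Injective fun (p : PrimeSpectrum B) (b : B) => primeCharacter k p b := by
  refine fun p q h => PrimeSpectrum.ext (Ideal.ext fun b => ?_)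
  have : primeCharacter k p b = primeCharacter k q b := congrFun h b
  rw [← primeCharacter_eq_zero_iff (k := k), this, primeCharacter_eq_zero_iff]

theorem primeCharacter_eq_indicator {e : B} (he : IsIdempotentElem e) (p : PrimeSpectrum B) :
    primeCharacter k p e = (PrimeSpectrum.basicOpen e : Set (PrimeSpectrum B)).indicator 1 p := by
  rcases IsIdempotentElem.iff_eq_zero_or_one.1 (he.map (primeCharacter k p)) with h | h
  · simp [h, primeCharacter_eq_zero_iff.1 h]
  · have : e ∉ p.asIdeal := fun hep => by
      rw [primeCharacter_eq_zero_iff.2 hep] at h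
      exact zero_ne_one h
    simp [h, this]

theorem eq_zero_of_primeCharacter_eq_zero [IsReduced B] {b : B}
    (hb : ∀ p : PrimeSpectrum B, primeCharacter k p b = 0) : b = 0 :=
  eq_zero_iff_forall_mem_primeSpectrum.2 fun p => primeCharacter_eq_zero_iff.1 (hb p)

variable [Algebra ℂ B] [Algebra.IsIntegral ℂ B] [StarRing B] [StarModule ℂ B]

theorem HasProperInvolution.span_isStarProjection (hB : HasProperInvolution B) :
    Submodule.span ℂ {e : B | IsStarProjection e} = ⊤ := by
  refine eq_top_iff.2 fun b _ => ?_
  have : IsStarNormal b := ⟨mul_comm _ _⟩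
  exact Submodule.span_mono (fun e he => he.1)
    (hB.mem_span_isStarProjection (Algebra.IsIntegral.isIntegral (R := ℂ) b))

theorem HasProperInvolution.span_induction (hB : HasProperInvolution B) {P : B → Prop}
    (projection : ∀ e, IsStarProjection e → P e) (add : ∀ a b, P a → P b → P (a + b))
    (smul : ∀ (z : ℂ) b, P b → P (z • b)) (b : B) : P b := by
  have hb : b ∈ Submodule.span ℂ {e : B | IsStarProjection e} := by
    rw [hB.span_isStarProjection]; trivial
  induction hb using Submodule.span_induction with
  | mem e he => exact projection e he
  | zero => exact projection 0 (.zero B)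
  | add a b _ _ ha hb => exact add a b ha hb
  | smul z b _ hb => exact smul z b hb

theorem HasProperInvolution.primeCharacter_star (hB : HasProperInvolution B)
    (p : PrimeSpectrum B) (b : B) : primeCharacter ℂ p (star b) = star (primeCharacter ℂ p b) := by
  induction b using hB.span_induction with
  | projection e he =>
    rw [he.isSelfAdjoint, primeCharacter_eq_indicator he.isIdempotentElem]
    by_cases hp : p ∈ PrimeSpectrum.basicOpen e <;> simp_all
  | add a b ha hb => simp only [star_add, map_add, ha, hb]
  | smul z b hb => simp only [star_smul, map_smul, hb]

theorem HasProperInvolution.continuous_primeCharacter (hB : HasProperInvolution B) (b : B) :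
    Continuous fun p : PrimeSpectrum B => primeCharacter ℂ p b := by
  induction b using hB.span_induction with
  | projection e he =>
    simp only [primeCharacter_eq_indicator he.isIdempotentElem]
    exact (PrimeSpectrum.isClopen_iff.2 ⟨e, he.isIdempotentElem, rfl⟩).continuous_indicator
      continuous_const
  | add a b ha hb => simp only [map_add]; exact ha.add hb
  | smul z b hb => simp only [map_smul]; exact hb.const_smul z

/-- The Gelfand transform of an algebraic commutative `*`-algebra with proper involution, the
prime spectrum playing the role of the character space. -/
noncomputable def HasProperInvolution.gelfandTransform (hB : HasProperInvolution B) :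
    B →⋆ₐ[ℂ] C(PrimeSpectrum B, ℂ) where
  toFun b := ⟨fun p => primeCharacter ℂ p b, hB.continuous_primeCharacter b⟩
  map_one' := by ext; simp
  map_mul' a b := by ext; simp
  map_zero' := by ext; simp
  map_add' a b := by ext; simp
  commutes' z := by ext; simp
  map_star' b := by ext p; exact hB.primeCharacter_star p b

theorem HasProperInvolution.gelfandTransform_injective (hB : HasProperInvolution B) :
    Function.Injective hB.gelfandTransform := by
  have := hB.isReduced
  refine (injective_iff_map_eq_zero _).2 fun b hb => ?_
  exact eq_zero_of_primeCharacter_eq_zero fun p => DFunLike.congr_fun hb p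

theorem HasProperInvolution.range_gelfandTransform (hB : HasProperInvolution B) :
    (hB.gelfandTransform.range : Set C(PrimeSpectrum B, ℂ)) =
      Submodule.span ℂ (clopenCharacteristicFunctions (PrimeSpectrum B)) := by
  have : hB.gelfandTransform '' {e | IsStarProjection e} =
      clopenCharacteristicFunctions (PrimeSpectrum B) := by
    ext f
    constructor
    · rintro ⟨e, he, rfl⟩
      exact ⟨_, PrimeSpectrum.isClopen_iff.2 ⟨e, he.isIdempotentElem, rfl⟩,
        primeCharacter_eq_indicator he.isIdempotentElem⟩
    · rintro ⟨U, hU, hf⟩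
      obtain ⟨e, he, rfl⟩ := PrimeSpectrum.isClopen_iff.1 hU
      refine ⟨e, hB.isStarProjection he, ContinuousMap.ext fun p => ?_⟩
      rw [hf, ← primeCharacter_eq_indicator (k := ℂ) he]
      rfl
  have span_image := Submodule.map_span hB.gelfandTransform.toAlgHom.toLinearMap
    {e | IsStarProjection e}
  rw [hB.span_isStarProjection, Submodule.map_top] at span_image
  rw [← this]
  exact congrArg SetLike.coe span_image

theorem HasProperInvolution.t2Space_primeSpectrum (hB : HasProperInvolution B) :
    T2Space (PrimeSpectrum B) :=
  .of_injective_continuous (primeCharacter_injective (k := ℂ))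
    (continuous_pi hB.continuous_primeCharacter)

end GelfandTransform

section CommutativeBaer

theorem IsBaerStarRing.extremallyDisconnected_primeSpectrum {B : Type*} [CommRing B] [StarRing B]
    (hB : IsBaerStarRing B) : ExtremallyDisconnected (PrimeSpectrum B) := by
  have := hB.hasProperInvolution.isReduced
  refine ⟨fun U hU => ?_⟩
  obtain ⟨I, hI⟩ := (PrimeSpectrum.isClosed_iff_zeroLocus_ideal Uᶜ).1 hU.isClosed_compl
  obtain ⟨f, hf, hfI⟩ := isBaerStarRing_iff.1 hB I ⟨0, I.zero_mem⟩
  have mem_U (p : PrimeSpectrum B) : p ∈ U ↔ ∃ s ∈ I, s ∉ p.asIdeal := by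
    rw [← not_iff_not, ← Set.mem_compl_iff, hI]
    simp [PrimeSpectrum.mem_zeroLocus, Set.subset_def]
  have vanishing_iff (y : B) : y ∈ PrimeSpectrum.vanishingIdeal U ↔ ∀ s ∈ I, s * y = 0 := by
    simp only [PrimeSpectrum.mem_vanishingIdeal, mem_U, eq_zero_iff_forall_mem_primeSpectrum,
      Ideal.IsPrime.mul_mem_iff_mem_or_mem]
    grind
  have : PrimeSpectrum.vanishingIdeal U = Ideal.span {f} := by
    ext y
    rw [vanishing_iff]
    refine (hfI y).trans ?_
    rw [Ideal.mem_span_singleton]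
    refine ⟨fun h => ⟨y, h.symm⟩, ?_⟩
    rintro ⟨z, rfl⟩
    rw [← mul_assoc, hf.isIdempotentElem]
  rw [← PrimeSpectrum.zeroLocus_vanishingIdeal_eq_closure, this, PrimeSpectrum.zeroLocus_span]
  exact (PrimeSpectrum.isClopen_iff_zeroLocus.2 ⟨f, hf.isIdempotentElem, rfl⟩).isOpen

end CommutativeBaer

section Decomposition

/-- The product of two isomorphisms of `*`-algebras. -/
def starAlgEquivProdCongr {𝕜 M M' N N' : Type*} [NonUnitalSemiring M] [NonUnitalSemiring M']
    [NonUnitalSemiring N] [NonUnitalSemiring N'] [Star M] [Star M'] [Star N] [Star N'] [SMul 𝕜 M]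
    [SMul 𝕜 M'] [SMul 𝕜 N] [SMul 𝕜 N'] (e : M ≃⋆ₐ[𝕜] M') (f : N ≃⋆ₐ[𝕜] N') :
    M × N ≃⋆ₐ[𝕜] M' × N' where
  __ := RingEquiv.prodCongr e.toRingEquiv f.toRingEquiv
  map_star' x := Prod.ext (map_star e x.1) (map_star f x.2)
  map_smul' r x := Prod.ext (map_smul e r x.1) (map_smul f r x.2)

namespace IsCentralProjection

variable (𝕜 : Type*) {R : Type*} [CommSemiring 𝕜] [NonUnitalRing R] [StarRing R] [Module 𝕜 R]
  [SMulCommClass 𝕜 R R] {c : R}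

/-- The projection `x ↦ c x` of a `*`-algebra onto the direct summand of `c`. -/
def toCorner (hc : IsCentralProjection c) : R →⋆ₙₐ[𝕜] hc.corner 𝕜 where
  toFun x := ⟨c * x, hc.mul_mem_corner 𝕜 x⟩
  map_smul' r x := Subtype.ext (mul_smul_comm r c x)
  map_zero' := Subtype.ext (mul_zero c)
  map_add' x y := Subtype.ext (mul_add c x y)
  map_mul' x y := Subtype.ext <| by
    change c * (x * y) = c * x * (c * y)
    rw [(hc.commute x).symm.mul_mul_mul_comm, hc.isIdempotentElem]
  map_star' x := Subtype.ext <| by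
    change c * star x = star (c * x)
    rw [star_mul, hc.isSelfAdjoint.star_eq, hc.commute]

theorem nonempty_starAlgEquiv_prod_corner {M : Type*} [NonUnitalRing M] [StarRing M] [Module 𝕜 M]
    (hc : IsCentralProjection c) {φ : R →⋆ₙₐ[𝕜] M} (hφ : Function.Surjective φ)
    (hker : ∀ x, φ x = 0 ↔ c * x = x) : Nonempty (R ≃⋆ₐ[𝕜] M × hc.corner 𝕜) := by
  refine ⟨.ofBijective (φ.prod (hc.toCorner 𝕜)) ⟨?_, ?_⟩⟩
  · refine (injective_iff_map_eq_zero _).2 fun x hx => ?_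
    rw [← (hker x).1 (congrArg Prod.fst hx)]
    exact congrArg (fun y => (y.2 : R)) hx
  · rintro ⟨y, z, hz⟩
    obtain ⟨x, rfl⟩ := hφ y
    have φ_mul (x : R) : φ (c * x) = 0 := (hker _).2 (hc.mul_mem_corner 𝕜 x)
    refine ⟨x - c * x + z, Prod.ext ?_ (Subtype.ext ?_)⟩
    · change φ (x - c * x + z) = φ x
      rw [map_add, map_sub, φ_mul, (hker z).2 hz, sub_zero, add_zero]
    · change c * (x - c * x + z) = z
      rw [mul_add, mul_sub, hc.mul_mem_corner 𝕜 x, sub_self, zero_add, hz]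

end IsCentralProjection

theorem IsBaerStarRing.exists_starAlgEquiv_span_clopen {B : Type u} [NonUnitalRing B] [Module ℂ B]
    [SMulCommClass ℂ B B] [IsScalarTower ℂ B B] [StarRing B] [StarModule ℂ B]
    (hB : IsBaerStarRing B) (halg : IsAlgebraicAlgebra B) (hcomm : ∀ x y : B, x * y = y * x) :
    ∃ (T : Type u) (_ : TopologicalSpace T), CompactSpace T ∧ T2Space T ∧
      ExtremallyDisconnected T ∧ ∃ S : StarSubalgebra ℂ C(T, ℂ),
        (S : Set C(T, ℂ)) =
          (Submodule.span ℂ (clopenCharacteristicFunctions T) : Set C(T, ℂ)) ∧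
        Nonempty (B ≃⋆ₐ[ℂ] S) := by
  let : CommRing B := { hB.toRing with mul_comm := hcomm }
  let : Algebra ℂ B := .ofModule smul_mul_assoc mul_smul_comm
  have : Algebra.IsIntegral ℂ B := halg.isIntegral
  have hprop : HasProperInvolution B := hB.hasProperInvolution
  exact ⟨PrimeSpectrum B, inferInstance, inferInstance, hprop.t2Space_primeSpectrum,
    hB.extremallyDisconnected_primeSpectrum, hprop.gelfandTransform.range,
    hprop.range_gelfandTransform, ⟨.ofInjective _ hprop.gelfandTransform_injective⟩⟩

theorem IsBaerStarRing.exists_starAlgEquiv_prod_corner {A : Type*} [Ring A] [StarRing A]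
    [Algebra ℂ A] [StarModule ℂ A] [Algebra.IsIntegral ℂ A] (hA : IsBaerStarRing A) :
    ∃ (m : ℕ) (n : Fin m → ℕ) (w : A) (hw : IsCentralProjection w), (∀ k, 2 ≤ n k) ∧
      (∀ x y : hw.corner ℂ, x * y = y * x) ∧
      Nonempty (A ≃⋆ₐ[ℂ] (∀ k, Matrix (Fin (n k)) (Fin (n k)) ℂ) × hw.corner ℂ) := by
  obtain ⟨m, n, φ, w, hn, hφ, hw, hker, hwv⟩ := hA.exists_matrix_decomposition
  refine ⟨m, n, w, hw, hn, fun x y => Subtype.ext ?_,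
    hw.nonempty_starAlgEquiv_prod_corner ℂ (φ := φ) hφ hker⟩
  have := hA.hasProperInvolution.central_mul_mul_comm hw hwv (x : A) y
  rwa [(hw.corner ℂ).mul_mem x.2 y.2, (hw.corner ℂ).mul_mem y.2 x.2] at this

end Decomposition

/-- A complex `*`-algebra is an algebraic Baer `*`-algebra iff it is
`*`-isomorphic to a direct sum `M ⊕ B`, where `M` is a finite direct product of full
complex matrix algebras of size at least `2 × 2` and `B` is the ℂ-linear span of the
characteristic functions of the clopen subsets of some Stonean space `T`. -/
theorem algebraic_baer_iff_matrix_sum_span_clopen (A : Type u) [NonUnitalRing A]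
    [Module ℂ A] [SMulCommClass ℂ A A] [IsScalarTower ℂ A A] [StarRing A] [StarModule ℂ A] :
    (IsAlgebraicAlgebra A ∧ IsBaerStarRing A) ↔
      ∃ (m : ℕ) (n : Fin m → ℕ), (∀ k, 2 ≤ n k) ∧
        ∃ (T : Type u) (_ : TopologicalSpace T), CompactSpace T ∧ T2Space T ∧
          ExtremallyDisconnected T ∧
          ∃ S : StarSubalgebra ℂ C(T, ℂ),
            (S : Set C(T, ℂ)) =
              (Submodule.span ℂ (clopenCharacteristicFunctions T) : Set C(T, ℂ)) ∧
            Nonempty (A ≃⋆ₐ[ℂ] ((∀ k, Matrix (Fin (n k)) (Fin (n k)) ℂ) × S)) := by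
  constructor
  · rintro ⟨halg, hA⟩
    let : Ring A := hA.toRing
    let : Algebra ℂ A := .ofModule smul_mul_assoc mul_smul_comm
    have := halg.isIntegral
    obtain ⟨m, n, w, hw, hn, hcomm, ⟨ψ⟩⟩ := hA.exists_starAlgEquiv_prod_corner
    have halgw : IsAlgebraicAlgebra (hw.corner ℂ) :=
      halg.of_injective (NonUnitalStarSubalgebraClass.subtype (hw.corner ℂ))
        Subtype.val_injective
    obtain ⟨T, _, hT, hT2, hTed, S, hS, ⟨γ⟩⟩ :=
      (hA.corner (𝕜 := ℂ) hw).exists_starAlgEquiv_span_clopen halgw hcomm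
    exact ⟨m, n, hn, T, _, hT, hT2, hTed, S, hS, ⟨ψ.trans (starAlgEquivProdCongr (.refl ℂ _) γ)⟩⟩
  · rintro ⟨m, n, -, T, _, -, -, _, S, hS, ⟨ψ⟩⟩
    have := isIntegral_of_eq_span_clopen S hS
    have halg := isAlgebraicAlgebra_of_isIntegral ((∀ k, Matrix (Fin (n k)) (Fin (n k)) ℂ) × S)
    exact ⟨halg.of_injective ψ ψ.injective, .of_equiv ψ (.prod (.pi fun _ => isBaerStarRing_matrix)
      (isBaerStarRing_of_eq_span_clopen S hS))⟩
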